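/- If M is a squarefree positive integer, then there exist positive integers A and B with B < A such that b_4(An+B) ≡ 0 (mod M) for all nonnegative integers n. -/

import Mathlib

/-- `bReg k n` is the number of `k`-regular partitions of `n`,
i.e. partitions of `n` in which no part is divisible by `k`. -/
noncomputable def bReg (k n : ℕ) : ℕ :=
  (Finset.univ.filter fun p : n.Partition => ∀ i ∈ p.parts, ¬ k ∣ i).card

/-!
Let `F = ∑ b₄(n) q ^ (8 * n + 1)` and `θ₄ = φ(-q ^ 8)`. For a prime `p ∉ {2, 3}` the Hasse invariant
is a polynomial in `F` times a power of `θ₄` and is congruent to `1` modulo `p`; hence `U_p F`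
modulo `p` lies in the finite space of the forms `θ₄ ^ (4 * (p - 1)) g(F)` with
`deg g ≤ 8 * (p - 1)`. The Hecke operator `T_3` preserves this space, and the recursion
`T_{3 ^ (n + 1)} = T_3 T_{3 ^ n} - c T_{3 ^ (n - 1)}` is invertible, so the sequence
`T_{3 ^ n} (U_p F)` is purely periodic; extended one step backwards it vanishes, so that
`T_{3 ^ N} (U_p F) = 0` whenever `N + 1` is a multiple of the period. This kills the coefficients of
`F` at `p * 3 ^ N * m` with `3 ∤ m`. Modulo `3`, the operator `U_3 ^ 2` acts on `U_3 F` by the sign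
`-1`, and `U_3 F` has no exponents congruent to `1` modulo `3`; modulo `2`, the exponents of `F` are
odd squares. One odd `N` serves all primes dividing `M` at once, and this gives the progression.
-/

namespace FourRegular

open PowerSeries Finset

/-! ### Finite forms of two identities of Gauss -/

section FiniteGauss

variable {R : Type*} [CommRing R] (x : R)

/-- The quotient `(x; x)_n / (x; x)_s = ∏_{s < k ≤ n} (1 - x ^ k)` of `q`-factorials. -/
def qFactorialQuot (n s : ℕ) : R := ∏ k ∈ Ico s n, (1 - x ^ (k + 1))

lemma qFactorialQuot_self (n : ℕ) : qFactorialQuot x n n = 1 := by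
  simp [qFactorialQuot]

lemma qFactorialQuot_zero_right (n : ℕ) :
    qFactorialQuot x n 0 = ∏ k ∈ range n, (1 - x ^ (k + 1)) := by
  simp [qFactorialQuot]

lemma qFactorialQuot_succ {n s : ℕ} (h : s ≤ n) :
    qFactorialQuot x (n + 1) s = qFactorialQuot x n s * (1 - x ^ (n + 1)) :=
  prod_Ico_succ_top h _

lemma qFactorialQuot_eq_mul_succ {n s : ℕ} (h : s < n) :
    qFactorialQuot x n s = (1 - x ^ (s + 1)) * qFactorialQuot x n (s + 1) :=
  prod_eq_prod_Ico_succ_bot h _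

/-- The `k`-th coefficient of `φ(-q) = 1 + 2 ∑_{k ≥ 1} (-1) ^ k q ^ (k ^ 2)`. -/
def phiNegCoeff (R : Type*) [CommRing R] (k : ℕ) : R := if k = 0 then 1 else 2 * (-1) ^ k

/-- The signed `q`-Pochhammer symbol `(-1) ^ s * (-1; x)_s`. -/
def signedPochhammer (s : ℕ) : R := (-1) ^ s * ∏ k ∈ range s, (1 + x ^ k)

lemma signedPochhammer_succ (s : ℕ) :
    signedPochhammer x (s + 1) = -signedPochhammer x s * (1 + x ^ s) := by
  rw [signedPochhammer, signedPochhammer, prod_range_succ]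
  ring

lemma signedPochhammer_succ_mul (n : ℕ) :
    signedPochhammer x (n + 1) * (1 + x ^ (n + 1)) =
      (∏ k ∈ range (n + 1), (1 + x ^ (k + 1))) * phiNegCoeff R (n + 1) := by
  rw [signedPochhammer, phiNegCoeff, if_neg n.succ_ne_zero, prod_range_succ', prod_range_succ]
  ring

/-- The `s`-th summand of Shanks' finite form of the expansion of `φ(-x)`. -/
def squareTerm (n s : ℕ) : R := signedPochhammer x s * qFactorialQuot x n s * x ^ (s * (n + 1))

lemma squareTerm_succ {n s : ℕ} (h : s ≤ n) :
    squareTerm x (n + 1) s = squareTerm x n s * ((1 - x ^ (n + 1)) * x ^ s) := by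
  rw [squareTerm, squareTerm, qFactorialQuot_succ x h]
  ring

lemma squareTerm_self (n : ℕ) : squareTerm x n n = signedPochhammer x n * x ^ (n * (n + 1)) := by
  rw [squareTerm, qFactorialQuot_self, mul_one]

lemma sum_squareTerm_telescope {n m : ℕ} (h : m ≤ n) :
    ∑ s ∈ range m, squareTerm x n s * ((1 - x ^ (n + 1)) * x ^ s - (1 + x ^ (n + 1))) =
      (1 - x ^ m) * squareTerm x n m := by
  induction m with
  | zero => simp
  | succ m ih =>
    rw [sum_range_succ, ih (by lia), squareTerm, squareTerm, signedPochhammer_succ,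
      qFactorialQuot_eq_mul_succ x h]
    ring

lemma sum_squareTerm_succ (n : ℕ) :
    ∑ s ∈ range (n + 2), squareTerm x (n + 1) s =
      (1 + x ^ (n + 1)) * (∑ s ∈ range (n + 1), squareTerm x n s +
        signedPochhammer x (n + 1) * x ^ ((n + 1) ^ 2)) := by
  have hshift : ∑ s ∈ range (n + 1), squareTerm x (n + 1) s =
      ∑ s ∈ range (n + 1), squareTerm x n s * ((1 - x ^ (n + 1)) * x ^ s) :=
    sum_congr rfl fun s hs => squareTerm_succ x (mem_range_succ_iff.1 hs)
  have htelescope := sum_squareTerm_telescope x (le_refl n)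
  simp only [mul_sub, sum_sub_distrib, ← sum_mul] at htelescope
  rw [sum_range_succ, hshift, sum_range_succ, sum_range_succ, squareTerm_self, squareTerm_self,
    signedPochhammer_succ]
  rw [squareTerm_self] at htelescope
  linear_combination htelescope

lemma prod_mul_sum_phiNegCoeff (n : ℕ) :
    (∏ k ∈ range n, (1 + x ^ (k + 1))) * ∑ k ∈ range (n + 1), phiNegCoeff R k * x ^ (k ^ 2) =
      ∑ s ∈ range (n + 1), squareTerm x n s := by
  induction n with
  | zero => simp [phiNegCoeff, squareTerm, signedPochhammer, qFactorialQuot]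
  | succ n ih =>
    have hlast := signedPochhammer_succ_mul x n
    rw [prod_range_succ] at hlast
    rw [sum_range_succ _ (n + 1), prod_range_succ, sum_squareTerm_succ, ← ih]
    linear_combination -x ^ ((n + 1) ^ 2) * hlast

lemma exists_prod_mul_sum_phiNegCoeff (n : ℕ) :
    ∃ r : R, (∏ k ∈ range n, (1 + x ^ (k + 1))) *
        ∑ k ∈ range (n + 1), phiNegCoeff R k * x ^ (k ^ 2) =
      ∏ k ∈ range n, (1 - x ^ (k + 1)) + x ^ (n + 1) * r := by
  refine ⟨∑ k ∈ range n,
    signedPochhammer x (k + 1) * qFactorialQuot x n (k + 1) * x ^ (k * (n + 1)), ?_⟩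
  rw [prod_mul_sum_phiNegCoeff, sum_range_succ', mul_sum, add_comm]
  congr 1
  · simp [squareTerm, signedPochhammer, qFactorialQuot]
  · exact sum_congr rfl fun k _ => by rw [squareTerm]; ring

/-- The `q`-Pochhammer symbol `(x; x ^ 2)_s`. -/
def oddPochhammer (s : ℕ) : R := ∏ k ∈ range s, (1 - x ^ (2 * k + 1))

lemma oddPochhammer_succ (s : ℕ) :
    oddPochhammer x (s + 1) = oddPochhammer x s * (1 - x ^ (2 * s + 1)) :=
  prod_range_succ _ _

/-- The `s`-th summand of Shanks' finite form of the expansion of `ψ(x)`. -/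
def triangleTerm (n s : ℕ) : R :=
  qFactorialQuot (x ^ 2) n s * oddPochhammer x s * x ^ (s * (2 * n + 1))

lemma triangleTerm_succ {n s : ℕ} (h : s ≤ n) :
    triangleTerm x (n + 1) s = triangleTerm x n s * ((1 - x ^ (2 * n + 2)) * x ^ (2 * s)) := by
  rw [triangleTerm, triangleTerm, qFactorialQuot_succ _ h]
  ring

lemma triangleTerm_self (n : ℕ) :
    triangleTerm x n n = oddPochhammer x n * x ^ (n * (2 * n + 1)) := by
  rw [triangleTerm, qFactorialQuot_self, one_mul]

lemma sum_triangleTerm_telescope {n m : ℕ} (h : m ≤ n) :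
    ∑ s ∈ range m, triangleTerm x n s *
        ((1 - x ^ (2 * n + 2)) * x ^ (2 * s) - (1 - x ^ (2 * n + 1))) =
      (1 - x ^ (2 * m)) * triangleTerm x n m := by
  induction m with
  | zero => simp
  | succ m ih =>
    rw [sum_range_succ, ih (by lia), triangleTerm, triangleTerm, oddPochhammer_succ,
      qFactorialQuot_eq_mul_succ _ h]
    ring

lemma sum_triangleTerm_succ (n : ℕ) :
    ∑ s ∈ range (n + 1), triangleTerm x (n + 1) s =
      (1 - x ^ (2 * n + 1)) * (∑ s ∈ range n, triangleTerm x n s +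
        oddPochhammer x n * (x ^ (n * (2 * n + 1)) + x ^ ((n + 1) * (2 * n + 1)))) := by
  have hshift : ∑ s ∈ range n, triangleTerm x (n + 1) s =
      ∑ s ∈ range n, triangleTerm x n s * ((1 - x ^ (2 * n + 2)) * x ^ (2 * s)) :=
    sum_congr rfl fun s hs => triangleTerm_succ x (mem_range.1 hs).le
  have htelescope := sum_triangleTerm_telescope x (le_refl n)
  simp only [mul_sub, sum_sub_distrib, ← sum_mul] at htelescope
  rw [triangleTerm_self] at htelescope
  rw [sum_range_succ, hshift, triangleTerm_succ x le_rfl, triangleTerm_self]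
  linear_combination htelescope

lemma two_mul_triangle (k : ℕ) : 2 * (k * (k + 1) / 2) = k * (k + 1) :=
  Nat.mul_div_cancel' (Nat.even_mul_succ_self k).two_dvd

lemma oddPochhammer_mul_sum (n : ℕ) :
    oddPochhammer x n * ∑ k ∈ range (2 * n), x ^ (k * (k + 1) / 2) =
      ∑ s ∈ range n, triangleTerm x n s := by
  induction n with
  | zero => simp
  | succ n ih =>
    have heven : 2 * n * (2 * n + 1) / 2 = n * (2 * n + 1) := by
      have := two_mul_triangle (2 * n)
      lia
    have hodd : (2 * n + 1) * (2 * n + 1 + 1) / 2 = (n + 1) * (2 * n + 1) := by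
      have := two_mul_triangle (2 * n + 1)
      lia
    rw [sum_triangleTerm_succ, ← ih, show 2 * (n + 1) = 2 * n + 1 + 1 by ring, sum_range_succ,
      sum_range_succ, heven, hodd, oddPochhammer_succ]
    ring

lemma exists_prod_mul_sum_triangle (n : ℕ) :
    ∃ r : R, (∏ k ∈ range (n + 1), (1 - x ^ (2 * k + 1))) *
        ∑ k ∈ range (2 * (n + 1)), x ^ (k * (k + 1) / 2) =
      ∏ k ∈ range (n + 1), (1 - (x ^ 2) ^ (k + 1)) + x ^ (n + 1) * r := by
  refine ⟨∑ k ∈ range n, qFactorialQuot (x ^ 2) (n + 1) (k + 1) * oddPochhammer x (k + 1) *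
    x ^ (k * (2 * (n + 1) + 1) + n + 2), ?_⟩
  rw [← oddPochhammer, oddPochhammer_mul_sum, sum_range_succ', mul_sum, add_comm]
  congr 1
  · simp [triangleTerm, qFactorialQuot_zero_right, oddPochhammer]
  · exact sum_congr rfl fun k _ => by rw [triangleTerm]; ring

end FiniteGauss

/-! ### Sparse power series -/

section SparseSeries

variable {R : Type*} [CommRing R] {a : ℕ → R} {e : ℕ → ℕ}

/-- The series `∑ k, a k * X ^ e k`. The coefficient of `X ^ n` only sums over `k ≤ n`, which is
enough when `e` is strictly increasing. -/
noncomputable def sparseSeries (a : ℕ → R) (e : ℕ → ℕ) : R⟦X⟧ :=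
  PowerSeries.mk fun n => ∑ k ∈ range (n + 1), if e k = n then a k else 0

/-- The operator `V_k : f(q) ↦ f(q ^ k)`. -/
noncomputable abbrev V (k : ℕ) [NeZero k] : R⟦X⟧ →ₐ[R] R⟦X⟧ := expand k (NeZero.ne k)

lemma coeff_sparseSeries (he : StrictMono e) (k : ℕ) : coeff (e k) (sparseSeries a e) = a k := by
  rw [sparseSeries, coeff_mk, sum_eq_single k _ fun hk => (hk ?_).elim, if_pos rfl]
  · exact fun j _ hj => if_neg fun h => hj (he.injective h)
  · exact mem_range_succ_iff.2 (he.id_le k)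

lemma coeff_sparseSeries_eq_zero {n : ℕ} (hn : ∀ k, e k ≠ n) :
    coeff n (sparseSeries a e) = 0 := by
  rw [sparseSeries, coeff_mk]
  exact sum_eq_zero fun k _ => if_neg (hn k)

lemma sparseSeries_eq (he : StrictMono e) {f : R⟦X⟧} (hf : ∀ k, coeff (e k) f = a k)
    (hf₀ : ∀ n, (∀ k, e k ≠ n) → coeff n f = 0) : sparseSeries a e = f := by
  ext n
  by_cases h : ∃ k, e k = n
  · obtain ⟨k, rfl⟩ := h
    rw [coeff_sparseSeries he, hf]
  · push Not at h
    rw [coeff_sparseSeries_eq_zero h, hf₀ n h]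

lemma V_sparseSeries (he : StrictMono e) (p : ℕ) [NeZero p] :
    V p (sparseSeries a e) = sparseSeries a fun k => p * e k := by
  have hp : 0 < p := NeZero.pos p
  refine (sparseSeries_eq (fun _ _ h => Nat.mul_lt_mul_of_pos_left (he h) hp) (fun k => ?_)
    fun n hn => ?_).symm
  · rw [coeff_expand_mul, coeff_sparseSeries he]
  · rw [coeff_expand]
    split_ifs with hd
    · obtain ⟨m, rfl⟩ := hd
      rw [Nat.mul_div_cancel_left _ hp]
      exact coeff_sparseSeries_eq_zero fun k hk => hn k (by rw [hk])
    · rfl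

lemma X_pow_mul_sparseSeries (he : StrictMono e) (c : ℕ) :
    X ^ c * sparseSeries a e = sparseSeries a fun k => e k + c := by
  refine (sparseSeries_eq (fun _ _ h => Nat.add_lt_add_right (he h) c) (fun k => ?_)
    fun n hn => ?_).symm
  · rw [coeff_X_pow_mul, coeff_sparseSeries he]
  · rw [coeff_X_pow_mul']
    split_ifs with hc
    · exact coeff_sparseSeries_eq_zero fun k hk => hn k (by lia)
    · rfl

lemma sparseSeries_eq_even_add_odd (he : StrictMono e) :
    sparseSeries a e = (sparseSeries (fun k => a (2 * k)) fun k => e (2 * k)) +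
      sparseSeries (fun k => a (2 * k + 1)) fun k => e (2 * k + 1) := by
  have heven : StrictMono fun k => e (2 * k) := fun _ _ h => he (by lia)
  have hodd : StrictMono fun k => e (2 * k + 1) := fun _ _ h => he (by lia)
  refine sparseSeries_eq he (fun k => ?_) fun n hn => ?_
  · obtain ⟨j, rfl | rfl⟩ := Nat.even_or_odd' k
    · rw [map_add, coeff_sparseSeries (a := fun k => a (2 * k)) heven,
        coeff_sparseSeries_eq_zero fun i hi => by have := he.injective hi; lia, add_zero]
    · rw [map_add, coeff_sparseSeries (a := fun k => a (2 * k + 1)) hodd,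
        coeff_sparseSeries_eq_zero fun i hi => by have := he.injective hi; lia, zero_add]
  · rw [map_add, coeff_sparseSeries_eq_zero fun k => hn _,
      coeff_sparseSeries_eq_zero fun k => hn _, add_zero]

lemma X_pow_dvd_sparseSeries_sub (he : StrictMono e) :
    X ^ e 1 ∣ sparseSeries a e - C (a 0) * X ^ e 0 := by
  refine X_pow_dvd_iff.2 fun n hn => ?_
  rw [map_sub, coeff_C_mul, coeff_X_pow]
  split_ifs with h
  · rw [h, coeff_sparseSeries he, mul_one, sub_self]
  · rw [mul_zero, sub_zero]
    refine coeff_sparseSeries_eq_zero fun k hk => ?_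
    rcases Nat.eq_zero_or_pos k with rfl | hk0
    · exact h hk.symm
    · exact absurd (he.monotone (show 1 ≤ k from hk0)) (by lia)

open scoped PowerSeries.WithPiTopology Topology
open Filter

lemma tendsto_sum_sparseSeries [TopologicalSpace R] (he : StrictMono e) :
    Tendsto (fun n => ∑ k ∈ range n, C (a k) * X ^ e k) atTop (𝓝 (sparseSeries a e)) := by
  refine (WithPiTopology.tendsto_iff_coeff_tendsto _ _ _ _).2 fun d => tendsto_const_nhds.congr' ?_
  filter_upwards [eventually_gt_atTop d] with n hn
  simp only [sparseSeries, coeff_mk, map_sum, coeff_C_mul, coeff_X_pow, mul_ite, mul_one, mul_zero,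
    eq_comm (a := d)]
  refine sum_subset (range_subset_range.2 hn) fun k _ hk => if_neg fun h => hk ?_
  exact mem_range_succ_iff.2 (h ▸ he.id_le k)

end SparseSeries

/-! ### Infinite products -/

section InfiniteProducts

open scoped PowerSeries.WithPiTopology Topology
open Filter

lemma multipliable_of_X_pow_dvd {f : ℕ → ℤ⟦X⟧} (hf : ∀ i, X ^ (i + 1) ∣ f i - 1) :
    Multipliable f := by
  have h := WithPiTopology.multipliable_one_add_of_tendsto_order_atTop_nhds_top ℤ
    (f := fun i => f i - 1) <|
    ENat.tendsto_nhds_top_iff_natCast_lt.2 fun n => eventually_atTop.2 ⟨n, fun m hm => ?_⟩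
  · simpa using h
  · refine lt_of_lt_of_le ?_ (le_order _ (m + 1 : ℕ) fun i hi =>
      X_pow_dvd_iff.1 (hf m) i (by exact_mod_cast hi))
    exact_mod_cast Nat.lt_succ_of_le hm

lemma tendsto_prod_of_X_pow_dvd {f : ℕ → ℤ⟦X⟧} (hf : ∀ i, X ^ (i + 1) ∣ f i - 1) :
    Tendsto (fun n => ∏ i ∈ range n, f i) atTop (𝓝 (∏' i, f i)) :=
  (multipliable_of_X_pow_dvd hf).hasProd.tendsto_prod_nat

lemma tprod_ne_zero_of_X_pow_dvd {f : ℕ → ℤ⟦X⟧} (hf : ∀ i, X ^ (i + 1) ∣ f i - 1) :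
    ∏' i, f i ≠ 0 := by
  intro hzero
  have hone (i : ℕ) : constantCoeff (f i) = 1 := by
    simpa [sub_eq_zero] using X_pow_dvd_iff.1 (hf i) 0 i.succ_pos
  have hlim := ((WithPiTopology.continuous_constantCoeff ℤ).tendsto _).comp
    (tendsto_prod_of_X_pow_dvd hf)
  simp only [hzero, Function.comp_def, map_prod, hone, prod_const_one, map_zero] at hlim
  exact one_ne_zero (tendsto_nhds_unique tendsto_const_nhds hlim)

/-- The infinite product `(-x; x)_∞ = ∏_{i ≥ 1} (1 + x ^ i)`; it converges when `X ∣ x`. -/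
noncomputable def prodOneAdd (x : ℤ⟦X⟧) : ℤ⟦X⟧ := ∏' i : ℕ, (1 + x ^ (i + 1))

/-- The infinite product `(x; x)_∞ = ∏_{i ≥ 1} (1 - x ^ i)`; it converges when `X ∣ x`. -/
noncomputable def prodOneSub (x : ℤ⟦X⟧) : ℤ⟦X⟧ := ∏' i : ℕ, (1 - x ^ (i + 1))

/-- The infinite product `(x; x ^ 2)_∞` of the `1 - x ^ i` over odd `i`; it converges when
`X ∣ x`. -/
noncomputable def prodOneSubOdd (x : ℤ⟦X⟧) : ℤ⟦X⟧ := ∏' i : ℕ, (1 - x ^ (2 * i + 1))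

variable {x : ℤ⟦X⟧}

lemma X_pow_dvd_pow (hx : X ∣ x) {i j : ℕ} (h : i ≤ j) : X ^ i ∣ x ^ j :=
  (pow_dvd_pow_of_dvd hx i).trans (pow_dvd_pow x h)

lemma X_pow_dvd_one_add_pow_sub_one (hx : X ∣ x) (i : ℕ) : X ^ (i + 1) ∣ 1 + x ^ (i + 1) - 1 := by
  rw [add_sub_cancel_left]
  exact X_pow_dvd_pow hx le_rfl

lemma X_pow_dvd_one_sub_pow_sub_one (hx : X ∣ x) {i j : ℕ} (h : i ≤ j) :
    X ^ i ∣ 1 - x ^ j - 1 := by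
  rw [sub_sub_cancel_left, dvd_neg]
  exact X_pow_dvd_pow hx h

lemma tendsto_prodOneAdd (hx : X ∣ x) :
    Tendsto (fun n => ∏ i ∈ range n, (1 + x ^ (i + 1))) atTop (𝓝 (prodOneAdd x)) :=
  tendsto_prod_of_X_pow_dvd (X_pow_dvd_one_add_pow_sub_one hx)

lemma tendsto_prodOneSub (hx : X ∣ x) :
    Tendsto (fun n => ∏ i ∈ range n, (1 - x ^ (i + 1))) atTop (𝓝 (prodOneSub x)) :=
  tendsto_prod_of_X_pow_dvd fun _ => X_pow_dvd_one_sub_pow_sub_one hx le_rfl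

lemma tendsto_prodOneSubOdd (hx : X ∣ x) :
    Tendsto (fun n => ∏ i ∈ range n, (1 - x ^ (2 * i + 1))) atTop (𝓝 (prodOneSubOdd x)) :=
  tendsto_prod_of_X_pow_dvd fun _ => X_pow_dvd_one_sub_pow_sub_one hx (by lia)

lemma prodOneAdd_ne_zero (hx : X ∣ x) : prodOneAdd x ≠ 0 :=
  tprod_ne_zero_of_X_pow_dvd (X_pow_dvd_one_add_pow_sub_one hx)

lemma prodOneSubOdd_ne_zero (hx : X ∣ x) : prodOneSubOdd x ≠ 0 :=
  tprod_ne_zero_of_X_pow_dvd fun _ => X_pow_dvd_one_sub_pow_sub_one hx (by lia)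

lemma X_dvd_sq (hx : X ∣ x) : X ∣ x ^ 2 := hx.trans (dvd_pow_self x two_ne_zero)

lemma prodOneSub_mul_prodOneAdd (hx : X ∣ x) :
    prodOneSub x * prodOneAdd x = prodOneSub (x ^ 2) := by
  refine tendsto_nhds_unique ((tendsto_prodOneSub hx).mul (tendsto_prodOneAdd hx))
    ((tendsto_prodOneSub (X_dvd_sq hx)).congr fun n => ?_)
  rw [← prod_mul_distrib]
  exact prod_congr rfl fun _ _ => by ring

lemma tendsto_two_mul_atTop : Tendsto (fun n : ℕ => 2 * n) atTop atTop :=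
  tendsto_id.const_mul_atTop' two_pos

lemma prod_range_two_mul {M : Type*} [CommMonoid M] (f : ℕ → M) (n : ℕ) :
    ∏ i ∈ range (2 * n), f i =
      (∏ i ∈ range n, f (2 * i)) * ∏ i ∈ range n, f (2 * i + 1) := by
  induction n with
  | zero => simp
  | succ n ih => simp only [mul_add_one, prod_range_succ, ih, mul_assoc, mul_left_comm]

lemma prodOneSubOdd_mul_prodOneSub_sq (hx : X ∣ x) :
    prodOneSubOdd x * prodOneSub (x ^ 2) = prodOneSub x := by
  refine tendsto_nhds_unique
    ((tendsto_prodOneSubOdd hx).mul (tendsto_prodOneSub (X_dvd_sq hx)))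
    (((tendsto_prodOneSub hx).comp tendsto_two_mul_atTop).congr fun n => ?_)
  rw [Function.comp_apply, prod_range_two_mul]
  congr 1
  exact prod_congr rfl fun _ _ => by ring

lemma prodOneSubOdd_neg_mul_prodOneAdd_sq (hx : X ∣ x) :
    prodOneSubOdd (-x) * prodOneAdd (x ^ 2) = prodOneAdd x := by
  refine tendsto_nhds_unique
    ((tendsto_prodOneSubOdd (dvd_neg.2 hx)).mul (tendsto_prodOneAdd (X_dvd_sq hx)))
    (((tendsto_prodOneAdd hx).comp tendsto_two_mul_atTop).congr fun n => ?_)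
  rw [Function.comp_apply, prod_range_two_mul]
  congr 1
  · exact prod_congr rfl fun i _ => by rw [(odd_two_mul_add_one i).neg_pow, sub_neg_eq_add]
  · exact prod_congr rfl fun _ _ => by ring

lemma prodOneSubOdd_mul_prodOneSubOdd_neg (hx : X ∣ x) :
    prodOneSubOdd x * prodOneSubOdd (-x) = prodOneSubOdd (x ^ 2) := by
  refine tendsto_nhds_unique
    ((tendsto_prodOneSubOdd hx).mul (tendsto_prodOneSubOdd (dvd_neg.2 hx)))
    ((tendsto_prodOneSubOdd (X_dvd_sq hx)).congr fun n => ?_)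
  rw [← prod_mul_distrib]
  exact prod_congr rfl fun i _ => by rw [(odd_two_mul_add_one i).neg_pow]; ring

lemma tendsto_pow_succ_mul_zero (hx : X ∣ x) (r : ℕ → ℤ⟦X⟧) :
    Tendsto (fun n => x ^ (n + 1) * r n) atTop (𝓝 0) := by
  refine (WithPiTopology.tendsto_iff_coeff_tendsto _ _ _ _).2 fun d => tendsto_const_nhds.congr' ?_
  filter_upwards [eventually_ge_atTop d] with n hn
  have hdvd : X ^ (n + 1) ∣ x ^ (n + 1) * r n := (X_pow_dvd_pow hx le_rfl).mul_right _
  rw [X_pow_dvd_iff.1 hdvd d (Nat.lt_succ_of_le hn), map_zero]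

lemma prodOneAdd_mul_of_tendsto (hx : X ∣ x) {f : ℤ⟦X⟧}
    (hf : Tendsto (fun n => ∑ k ∈ range n, phiNegCoeff ℤ⟦X⟧ k * x ^ (k ^ 2)) atTop (𝓝 f)) :
    prodOneAdd x * f = prodOneSub x := by
  choose r hr using exists_prod_mul_sum_phiNegCoeff x
  have hlim := (tendsto_prodOneSub hx).add (tendsto_pow_succ_mul_zero hx r)
  rw [add_zero] at hlim
  exact tendsto_nhds_unique ((tendsto_prodOneAdd hx).mul (hf.comp (tendsto_add_atTop_nat 1)))
    (hlim.congr fun n => (hr n).symm)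

lemma prodOneSubOdd_mul_of_tendsto (hx : X ∣ x) {f : ℤ⟦X⟧}
    (hf : Tendsto (fun n => ∑ k ∈ range n, x ^ (k * (k + 1) / 2)) atTop (𝓝 f)) :
    prodOneSubOdd x * f = prodOneSub (x ^ 2) := by
  choose r hr using exists_prod_mul_sum_triangle x
  have hlim := ((tendsto_prodOneSub (X_dvd_sq hx)).comp (tendsto_add_atTop_nat 1)).add
    (tendsto_pow_succ_mul_zero hx r)
  rw [add_zero] at hlim
  exact tendsto_nhds_unique
    (((tendsto_prodOneSubOdd hx).mul (hf.comp tendsto_two_mul_atTop)).comp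
      (tendsto_add_atTop_nat 1))
    (hlim.congr fun n => (hr n).symm)

end InfiniteProducts

/-! ### Theta functions -/

/-- Ramanujan's `φ(q) = ∑_{k ∈ ℤ} q ^ (k ^ 2)`. -/
noncomputable def phi : ℤ⟦X⟧ := sparseSeries (fun k => if k = 0 then 1 else 2) fun k => k ^ 2

/-- The series `φ(-q)`. -/
noncomputable def phiNeg : ℤ⟦X⟧ := sparseSeries (phiNegCoeff ℤ) fun k => k ^ 2

/-- Ramanujan's `ψ(q) = ∑_{k ≥ 0} q ^ (k * (k + 1) / 2)`. -/
noncomputable def psi : ℤ⟦X⟧ := sparseSeries (fun _ => 1) fun k => k * (k + 1) / 2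

/-- The series `ψ(-q)`. -/
noncomputable def psiNeg : ℤ⟦X⟧ :=
  sparseSeries (fun k => (-1) ^ (k * (k + 1) / 2)) fun k => k * (k + 1) / 2

lemma strictMono_sq : StrictMono fun k : ℕ => k ^ 2 :=
  fun _ _ h => Nat.pow_lt_pow_left h two_ne_zero

lemma strictMono_triangle : StrictMono fun k : ℕ => k * (k + 1) / 2 :=
  strictMono_nat_of_lt_succ fun k => by
    have := two_mul_triangle k
    have := two_mul_triangle (k + 1)
    lia

lemma strictMono_odd_sq : StrictMono fun k : ℕ => (2 * k + 1) ^ 2 :=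
  fun _ _ h => Nat.pow_lt_pow_left (by lia) two_ne_zero

lemma strictMono_const_mul {e : ℕ → ℕ} (he : StrictMono e) {c : ℕ} (hc : 0 < c) :
    StrictMono fun k => c * e k :=
  fun _ _ h => Nat.mul_lt_mul_of_pos_left (he h) hc

section ProductFormulas

open scoped PowerSeries.WithPiTopology Topology
open Filter

lemma X_dvd_X_pow (c : ℕ) [NeZero c] : (X : ℤ⟦X⟧) ∣ X ^ c := dvd_pow_self X (NeZero.ne c)

lemma X_dvd_neg_X : (X : ℤ⟦X⟧) ∣ -X := dvd_neg.2 dvd_rfl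

lemma prodOneAdd_mul_phiNeg (c : ℕ) [NeZero c] :
    prodOneAdd (X ^ c) * V c phiNeg = prodOneSub (X ^ c) := by
  refine prodOneAdd_mul_of_tendsto (X_dvd_X_pow c) ?_
  rw [phiNeg, V_sparseSeries strictMono_sq]
  refine (tendsto_sum_sparseSeries (strictMono_const_mul strictMono_sq (NeZero.pos c))).congr
    fun n => sum_congr rfl fun k _ => ?_
  rw [pow_mul, phiNegCoeff, phiNegCoeff]
  split_ifs <;> simp

lemma prodOneAdd_neg_mul_phi : prodOneAdd (-X) * phi = prodOneSub (-X) := by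
  refine prodOneAdd_mul_of_tendsto X_dvd_neg_X <|
    (tendsto_sum_sparseSeries strictMono_sq).congr fun n => sum_congr rfl fun k _ => ?_
  have hsign : (-1 : ℤ⟦X⟧) ^ k * (-1) ^ k ^ 2 = 1 := by
    rw [← pow_add, show k + k ^ 2 = k * (k + 1) by ring]
    exact (Nat.even_mul_succ_self k).neg_one_pow
  rw [neg_pow, phiNegCoeff]
  split_ifs with hk
  · simp [hk]
  · rw [map_ofNat]
    linear_combination -2 * X ^ k ^ 2 * hsign

lemma prodOneSubOdd_mul_psi (c : ℕ) [NeZero c] :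
    prodOneSubOdd (X ^ c) * V c psi = prodOneSub ((X ^ c) ^ 2) := by
  refine prodOneSubOdd_mul_of_tendsto (X_dvd_X_pow c) ?_
  rw [psi, V_sparseSeries strictMono_triangle]
  refine (tendsto_sum_sparseSeries (strictMono_const_mul strictMono_triangle (NeZero.pos c))).congr
    fun n => sum_congr rfl fun k _ => ?_
  rw [map_one, one_mul, pow_mul]

lemma prodOneSubOdd_neg_mul_psiNeg : prodOneSubOdd (-X) * psiNeg = prodOneSub ((-X) ^ 2) := by
  refine prodOneSubOdd_mul_of_tendsto X_dvd_neg_X <|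
    (tendsto_sum_sparseSeries strictMono_triangle).congr fun n => sum_congr rfl fun k _ => ?_
  rw [map_pow, map_neg, map_one, neg_pow X]

lemma phiNeg_mul_phi : phiNeg * phi = V 2 phiNeg ^ 2 := by
  have h₁ := prodOneAdd_mul_phiNeg 1
  have h₂ := prodOneAdd_neg_mul_phi
  have hneg := prodOneSubOdd_neg_mul_prodOneAdd_sq X_dvd_neg_X
  have hneg' := prodOneSubOdd_mul_prodOneSub_sq X_dvd_neg_X
  rw [neg_sq] at hneg hneg'
  rw [neg_neg] at hneg
  rw [pow_one, V, expand_one_apply, ← prodOneSubOdd_neg_mul_prodOneAdd_sq dvd_rfl,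
    ← prodOneSubOdd_mul_prodOneSub_sq dvd_rfl, ← prodOneAdd_mul_phiNeg 2] at h₁
  rw [← hneg, ← hneg', ← prodOneAdd_mul_phiNeg 2] at h₂
  refine mul_left_cancel₀ (mul_ne_zero (mul_ne_zero (prodOneSubOdd_ne_zero dvd_rfl)
    (prodOneSubOdd_ne_zero X_dvd_neg_X)) (pow_ne_zero 2 (prodOneAdd_ne_zero (X_dvd_X_pow 2)))) ?_
  linear_combination h₁ * phi * prodOneSubOdd X * prodOneAdd (X ^ 2) +
    h₂ * prodOneSubOdd X * prodOneAdd (X ^ 2) * V 2 phiNeg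

/-- The product side of `ψ(x) ^ 2 = φ(x) ψ(x ^ 2)`, with `f`, `g`, `h` in the roles of `ψ(x)`,
`φ(x)`, `ψ(x ^ 2)`. -/
lemma sq_eq_mul_of_prodOneSubOdd_mul {x f g h : ℤ⟦X⟧} (hx : X ∣ x)
    (hf : prodOneSubOdd x * f = prodOneSub (x ^ 2))
    (hg : prodOneAdd (-x) * g = prodOneSub (-x))
    (hh : prodOneSubOdd (x ^ 2) * h = prodOneSub ((x ^ 2) ^ 2)) : f ^ 2 = g * h := by
  have hx' : X ∣ -x := dvd_neg.2 hx
  have hadd := prodOneSubOdd_neg_mul_prodOneAdd_sq hx'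
  have hsub := prodOneSubOdd_mul_prodOneSub_sq hx'
  rw [neg_neg, neg_sq] at hadd
  rw [neg_sq] at hsub
  rw [← hadd, ← hsub, ← hf] at hg
  rw [← prodOneSub_mul_prodOneAdd (X_dvd_sq hx), ← prodOneSubOdd_mul_prodOneSubOdd_neg hx,
    ← hf] at hh
  refine mul_left_cancel₀ (mul_ne_zero (mul_ne_zero (pow_ne_zero 2 (prodOneSubOdd_ne_zero hx))
    (prodOneSubOdd_ne_zero hx')) (prodOneAdd_ne_zero (X_dvd_sq hx))) ?_
  linear_combination -hh * prodOneSubOdd x * prodOneSubOdd (-x) * f -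
    hg * prodOneSubOdd x * prodOneSubOdd (-x) * h

lemma psi_sq : psi ^ 2 = phi * V 2 psi := by
  refine sq_eq_mul_of_prodOneSubOdd_mul (x := X) dvd_rfl ?_ prodOneAdd_neg_mul_phi
    (prodOneSubOdd_mul_psi 2)
  simpa [V, expand_one_apply] using prodOneSubOdd_mul_psi 1

lemma psiNeg_sq : psiNeg ^ 2 = phiNeg * V 2 psi := by
  refine sq_eq_mul_of_prodOneSubOdd_mul X_dvd_neg_X prodOneSubOdd_neg_mul_psiNeg ?_ ?_
  · simpa [V, expand_one_apply] using prodOneAdd_mul_phiNeg 1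
  · simpa using prodOneSubOdd_mul_psi 2

/-- The generating function `∑ b₄(n) q ^ n` of the number of `4`-regular partitions. -/
noncomputable def regGenFun : ℤ⟦X⟧ := PowerSeries.mk fun n => (bReg 4 n : ℤ)

lemma regGenFun_eq_prod : regGenFun = prodOneAdd X * prodOneAdd (X ^ 2) := by
  have hcount : regGenFun = PowerSeries.mk fun n => (#(Nat.Partition.countRestricted n 4) : ℤ) := by
    refine congrArg PowerSeries.mk (funext fun n => ?_)
    rw [← Nat.Partition.card_restricted_eq_card_countRestricted n (by norm_num)]
    rfl
  rw [hcount]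
  refine tendsto_nhds_unique (Nat.Partition.hasProd_powerSeriesMk_card_countRestricted ℤ (m := 4)
    (by norm_num)).tendsto_prod_nat (((tendsto_prodOneAdd dvd_rfl).mul
      (tendsto_prodOneAdd (X_dvd_X_pow 2))).congr fun n => ?_)
  rw [← prod_mul_distrib]
  refine prod_congr rfl fun i _ => ?_
  simp only [sum_range_succ, sum_range_zero]
  ring

lemma regGenFun_mul_phiNeg : regGenFun * phiNeg = psiNeg := by
  have hφ : prodOneAdd X * phiNeg = prodOneSub X := by
    simpa [V, expand_one_apply] using prodOneAdd_mul_phiNeg 1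
  have hψ := prodOneSubOdd_neg_mul_psiNeg
  rw [neg_sq, ← prodOneSub_mul_prodOneAdd dvd_rfl] at hψ
  refine mul_left_cancel₀ (prodOneSubOdd_ne_zero X_dvd_neg_X) ?_
  rw [hψ, regGenFun_eq_prod]
  linear_combination phiNeg * prodOneAdd X * prodOneSubOdd_neg_mul_prodOneAdd_sq (x := X) dvd_rfl +
    hφ * prodOneAdd X

end ProductFormulas

/-- The theta function `θ₃(q ^ 8) = φ(q ^ 8)`. -/
noncomputable def theta₃ : ℤ⟦X⟧ :=
  sparseSeries (fun k => if k = 0 then 1 else 2) fun k => 8 * k ^ 2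

/-- The theta function `θ₄(q ^ 8) = φ(-q ^ 8)`. -/
noncomputable def theta₄ : ℤ⟦X⟧ := sparseSeries (phiNegCoeff ℤ) fun k => 8 * k ^ 2

/-- Half of the theta function `θ₂(q ^ 8)`, that is, `q ^ 2 ψ(q ^ 16)`. -/
noncomputable def halfTheta₂ : ℤ⟦X⟧ := sparseSeries (fun _ => 1) fun k => 2 * (2 * k + 1) ^ 2

/-- The series `q ψ(-q ^ 8)`, the eta quotient `η(8τ) η(32τ) / η(16τ)`. -/
noncomputable def oddPsiNeg : ℤ⟦X⟧ :=
  sparseSeries (fun k => (-1) ^ (k * (k + 1) / 2)) fun k => (2 * k + 1) ^ 2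

/-- The series `F = ∑ b₄(n) q ^ (8 * n + 1)`, the eta quotient `η(32τ) / η(8τ)`. -/
noncomputable def regSeries : ℤ⟦X⟧ := X * V 8 regGenFun

lemma coeff_regSeries (n : ℕ) : coeff (8 * n + 1) regSeries = bReg 4 n := by
  rw [regSeries, coeff_succ_X_mul, coeff_expand_mul, regGenFun, coeff_mk]

lemma strictMono_eight_mul_sq : StrictMono fun k : ℕ => 8 * k ^ 2 :=
  strictMono_const_mul strictMono_sq (by norm_num)

lemma strictMono_two_mul_odd_sq : StrictMono fun k : ℕ => 2 * (2 * k + 1) ^ 2 :=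
  strictMono_const_mul strictMono_odd_sq two_pos

lemma V_X {R : Type*} [CommRing R] (k : ℕ) [NeZero k] : V k (X : R⟦X⟧) = X ^ k := expand_X ..

lemma V_V {R : Type*} [CommRing R] (a b : ℕ) [NeZero a] [NeZero b] (f : R⟦X⟧) :
    V a (V b f) = V (a * b) f :=
  (expand_mul ..).symm

lemma theta₃_eq_V_phi : theta₃ = V 8 phi := (V_sparseSeries strictMono_sq 8).symm

lemma theta₄_eq_V_phiNeg : theta₄ = V 8 phiNeg := (V_sparseSeries strictMono_sq 8).symm

lemma sparseSeries_odd_sq_eq {R : Type*} [CommRing R] (a : ℕ → R) (d : ℕ) [NeZero d] :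
    (sparseSeries a fun k => d * (2 * k + 1) ^ 2) =
      X ^ d * V (8 * d) (sparseSeries a fun k => k * (k + 1) / 2) := by
  rw [V_sparseSeries strictMono_triangle,
    X_pow_mul_sparseSeries (strictMono_const_mul strictMono_triangle (NeZero.pos _))]
  refine congrArg _ (funext fun k => ?_)
  calc d * (2 * k + 1) ^ 2 = 4 * d * (k * (k + 1)) + d := by ring
    _ = 4 * d * (2 * (k * (k + 1) / 2)) + d := by rw [two_mul_triangle]
    _ = 8 * d * (k * (k + 1) / 2) + d := by ring

lemma halfTheta₂_eq_X_sq_mul_V_psi : halfTheta₂ = X ^ 2 * V 16 psi := sparseSeries_odd_sq_eq _ 2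

lemma oddPsiNeg_eq_X_mul_V_psiNeg : oddPsiNeg = X * V 8 psiNeg := by
  simpa [oddPsiNeg, psiNeg] using sparseSeries_odd_sq_eq (fun k => (-1 : ℤ) ^ (k * (k + 1) / 2)) 1

lemma theta₄_mul_theta₃ : theta₄ * theta₃ = V 2 theta₄ ^ 2 := by
  rw [theta₃_eq_V_phi, theta₄_eq_V_phiNeg, ← map_mul, phiNeg_mul_phi, map_pow, V_V, V_V]

lemma halfTheta₂_sq : halfTheta₂ ^ 2 = V 2 halfTheta₂ * V 2 theta₃ := by
  rw [theta₃_eq_V_phi, halfTheta₂_eq_X_sq_mul_V_psi, mul_pow, ← map_pow, psi_sq]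
  simp only [map_mul, map_pow, V_X, V_V]
  ring

lemma oddPsiNeg_sq : oddPsiNeg ^ 2 = theta₄ * halfTheta₂ := by
  rw [theta₄_eq_V_phiNeg, halfTheta₂_eq_X_sq_mul_V_psi, oddPsiNeg_eq_X_mul_V_psiNeg, mul_pow,
    ← map_pow, psiNeg_sq, map_mul, V_V]
  ring

lemma regSeries_mul_theta₄ : regSeries * theta₄ = oddPsiNeg := by
  rw [regSeries, theta₄_eq_V_phiNeg, mul_assoc, ← map_mul, regGenFun_mul_phiNeg,
    oddPsiNeg_eq_X_mul_V_psiNeg]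

lemma V_four_theta₃ : V 4 theta₃ =
    sparseSeries (fun k => if k = 0 then 1 else 2) fun k => 8 * (2 * k) ^ 2 := by
  rw [theta₃, V_sparseSeries strictMono_eight_mul_sq]
  exact congrArg _ (funext fun k => by ring)

lemma V_four_halfTheta₂ : V 4 halfTheta₂ =
    sparseSeries (fun _ => 1) fun k => 8 * (2 * k + 1) ^ 2 := by
  rw [halfTheta₂, V_sparseSeries strictMono_two_mul_odd_sq]
  exact congrArg _ (funext fun k => by ring)

lemma C_mul_sparseSeries {R : Type*} [CommRing R] (c : R) (a : ℕ → R) (e : ℕ → ℕ) :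
    C c * sparseSeries a e = sparseSeries (fun k => c * a k) e := by
  ext n
  simp only [sparseSeries, coeff_C_mul, coeff_mk, mul_sum, mul_ite, mul_zero]

lemma theta₃_eq_add : theta₃ = V 4 theta₃ + 2 * V 4 halfTheta₂ := by
  rw [← map_ofNat C 2, V_four_theta₃, V_four_halfTheta₂, C_mul_sparseSeries, theta₃,
    sparseSeries_eq_even_add_odd strictMono_eight_mul_sq]
  simp

lemma theta₄_eq_sub : theta₄ = V 4 theta₃ - 2 * V 4 halfTheta₂ := by
  rw [sub_eq_add_neg, ← neg_mul, ← map_ofNat C 2, ← map_neg, V_four_theta₃, V_four_halfTheta₂,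
    C_mul_sparseSeries, theta₄, sparseSeries_eq_even_add_odd strictMono_eight_mul_sq]
  simp [phiNegCoeff, pow_succ]

lemma eq_zero_of_V_eq_neg {R : Type*} [CommRing R] [IsDomain R] [CharZero R] {k : ℕ} [NeZero k]
    (hk : 1 < k) {f : R⟦X⟧} (hf : V k f = -f) : f = 0 := by
  ext n
  induction n using Nat.strong_induction_on with
  | _ n ih =>
    have hn := congrArg (coeff n) hf
    rw [map_neg, coeff_expand] at hn
    split_ifs at hn with hdvd
    · rcases Nat.eq_zero_or_pos n with rfl | hpos
      · rw [Nat.zero_div] at hn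
        exact self_eq_neg.1 hn
      · rw [ih _ (Nat.div_lt_self hpos hk)] at hn
        simpa using hn.symm
    · simpa using hn.symm

lemma V_two_halfTheta₂_sq : V 2 halfTheta₂ ^ 2 = V 4 theta₃ * V 4 halfTheta₂ := by
  rw [← map_pow, halfTheta₂_sq, map_mul, V_V, V_V, mul_comm]

lemma theta₃_sq : theta₃ ^ 2 = V 2 theta₃ ^ 2 + 4 * V 2 halfTheta₂ ^ 2 := by
  rw [← sub_eq_zero]
  refine eq_zero_of_V_eq_neg one_lt_two ?_
  simp only [map_sub, map_add, map_mul, map_pow, map_ofNat, V_V]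
  linear_combination (theta₃ + V 4 theta₃ + 2 * V 4 halfTheta₂) * theta₃_eq_add -
    4 * V_two_halfTheta₂_sq

lemma theta₄_sq : theta₄ ^ 2 = V 2 theta₃ ^ 2 - 4 * V 2 halfTheta₂ ^ 2 := by
  linear_combination theta₃_sq -
    (theta₃ + V 4 theta₃ + 2 * V 4 halfTheta₂) * theta₃_eq_add +
    (theta₄ + V 4 theta₃ - 2 * V 4 halfTheta₂) * theta₄_eq_sub + 8 * V_two_halfTheta₂_sq

lemma theta₃_pow_four : theta₃ ^ 4 = theta₄ ^ 4 + 16 * halfTheta₂ ^ 4 := by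
  linear_combination
    (theta₃ ^ 2 + V 2 theta₃ ^ 2 + 4 * V 2 halfTheta₂ ^ 2) * theta₃_sq -
    (theta₄ ^ 2 + V 2 theta₃ ^ 2 - 4 * V 2 halfTheta₂ ^ 2) * theta₄_sq -
    16 * (halfTheta₂ ^ 2 + V 2 halfTheta₂ * V 2 theta₃) * halfTheta₂_sq

/-! ### The cubic modular equation -/

section ModXPow

variable {R : Type*} [CommRing R] {f g : R⟦X⟧} {m n : ℕ}

/-- Reduction of power series modulo `X ^ n`, used to read off leading terms. -/
noncomputable abbrev modXPow (n : ℕ) :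
    R⟦X⟧ →+* R⟦X⟧ ⧸ Ideal.span {(X : R⟦X⟧) ^ n} := Ideal.Quotient.mk _

lemma modXPow_eq_zero_iff : modXPow n f = 0 ↔ X ^ n ∣ f :=
  Ideal.Quotient.eq_zero_iff_mem.trans Ideal.mem_span_singleton

lemma modXPow_eq_of_dvd_sub (h : X ^ m ∣ f - g) (hn : n ≤ m) : modXPow n f = modXPow n g := by
  rw [← sub_eq_zero, ← map_sub, modXPow_eq_zero_iff]
  exact (pow_dvd_pow X hn).trans h

lemma X_pow_mul_dvd_V {f : R⟦X⟧} {n : ℕ} (h : X ^ n ∣ f) (k : ℕ) [NeZero k] :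
    X ^ (k * n) ∣ V k f := by
  simpa [V_X, ← pow_mul] using map_dvd (V k) h

lemma modXPow_V_eq_of_dvd_sub {k : ℕ} [NeZero k] (h : X ^ m ∣ f - g) (hn : n ≤ k * m) :
    modXPow n (V k f) = modXPow n (V k g) :=
  modXPow_eq_of_dvd_sub (by simpa using X_pow_mul_dvd_V h k) hn

lemma not_X_pow_dvd_of_modXPow_eq {r : R} (hr : r ≠ 0)
    (h : modXPow (n + 1) f = modXPow (n + 1) (C r * X ^ n)) : ¬ X ^ (n + 1) ∣ f := by
  rw [← modXPow_eq_zero_iff, h, modXPow_eq_zero_iff, X_pow_dvd_iff]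
  intro hf
  exact hr (by simpa [coeff_X_pow] using hf n n.lt_succ_self)

lemma X_pow_dvd_iff_le_order : X ^ n ∣ f ↔ (n : ℕ∞) ≤ f.order := by
  rw [order_eq_emultiplicity_X, pow_dvd_iff_le_emultiplicity]

lemma ne_zero_of_modXPow_eq {r : R} (hr : r ≠ 0)
    (h : modXPow (n + 1) f = modXPow (n + 1) (C r * X ^ n)) : f ≠ 0 := fun hf =>
  not_X_pow_dvd_of_modXPow_eq hr h (hf ▸ dvd_zero _)

/- If `f ≠ 0` had order `m ≥ n`, then `V k f` would have order `k * m`, so `A` would have order at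
least `(k - 1) * m ≥ n`. -/
lemma eq_zero_of_mul_eq_V_mul [IsDomain R] {A B : R⟦X⟧} {k : ℕ} [NeZero k] (hk : 1 < k)
    (hf : X ^ n ∣ f) (h : f * A = V k f * B) (hA : ¬ X ^ n ∣ A) : f = 0 := by
  by_contra hf₀
  have hord := congrArg PowerSeries.order h
  rw [order_mul, order_mul, order_expand] at hord
  rw [X_pow_dvd_iff_le_order] at hf hA
  rw [not_le] at hA
  lift A.order to ℕ using hA.ne_top with a
  lift f.order to ℕ using order_eq_top.not.2 hf₀ with m
  have hle : ((k • m : ℕ) : ℕ∞) ≤ ((m + a : ℕ) : ℕ∞) := by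
    push_cast
    exact hord ▸ le_self_add
  norm_cast at hf hA hle
  rw [smul_eq_mul] at hle
  nlinarith

end ModXPow

instance {R : Type*} [CommRing R] [CharZero R] : CharZero R⟦X⟧ :=
  charZero_of_injective_algebraMap (R := R) C_injective

lemma X_pow_eight_dvd_theta₃_sub_one : X ^ 8 ∣ theta₃ - 1 := by
  simpa [theta₃] using X_pow_dvd_sparseSeries_sub (a := fun k => if k = 0 then (1 : ℤ) else 2)
    strictMono_eight_mul_sq

lemma X_pow_eight_dvd_theta₄_sub_one : X ^ 8 ∣ theta₄ - 1 := by
  simpa [theta₄, phiNegCoeff] using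
    X_pow_dvd_sparseSeries_sub (a := phiNegCoeff ℤ) strictMono_eight_mul_sq

lemma X_pow_dvd_halfTheta₂_sub_X_sq : X ^ 18 ∣ halfTheta₂ - X ^ 2 := by
  simpa [halfTheta₂] using X_pow_dvd_sparseSeries_sub (a := fun _ => (1 : ℤ))
    strictMono_two_mul_odd_sq

lemma X_pow_nine_dvd_oddPsiNeg_sub_X : X ^ 9 ∣ oddPsiNeg - X := by
  simpa [oddPsiNeg] using X_pow_dvd_sparseSeries_sub (a := fun k => (-1 : ℤ) ^ (k * (k + 1) / 2))
    strictMono_odd_sq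

lemma modXPow_V_theta₃ {n k : ℕ} [NeZero k] (hn : n ≤ 8 * k) :
    modXPow n (V k theta₃) = 1 := by
  simpa using modXPow_V_eq_of_dvd_sub X_pow_eight_dvd_theta₃_sub_one (hn.trans_eq (mul_comm ..))

lemma modXPow_V_theta₄ {n k : ℕ} [NeZero k] (hn : n ≤ 8 * k) :
    modXPow n (V k theta₄) = 1 := by
  simpa using modXPow_V_eq_of_dvd_sub X_pow_eight_dvd_theta₄_sub_one (hn.trans_eq (mul_comm ..))

lemma modXPow_theta₄ {n : ℕ} (hn : n ≤ 8) : modXPow n theta₄ = 1 :=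
  modXPow_eq_of_dvd_sub X_pow_eight_dvd_theta₄_sub_one hn

lemma modXPow_V_halfTheta₂ {n k : ℕ} [NeZero k] (hn : n ≤ 18 * k) :
    modXPow n (V k halfTheta₂) = modXPow n X ^ (2 * k) := by
  simpa [V_X, ← pow_mul, mul_comm] using
    modXPow_V_eq_of_dvd_sub X_pow_dvd_halfTheta₂_sub_X_sq (hn.trans_eq (mul_comm ..))

lemma modXPow_halfTheta₂ {n : ℕ} (hn : n ≤ 18) : modXPow n halfTheta₂ = modXPow n X ^ 2 :=
  modXPow_eq_of_dvd_sub X_pow_dvd_halfTheta₂_sub_X_sq hn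

lemma modXPow_oddPsiNeg {n : ℕ} (hn : n ≤ 9) : modXPow n oddPsiNeg = modXPow n X :=
  modXPow_eq_of_dvd_sub X_pow_nine_dvd_oddPsiNeg_sub_X hn

lemma modXPow_V_oddPsiNeg {n k : ℕ} [NeZero k] (hn : n ≤ 9 * k) :
    modXPow n (V k oddPsiNeg) = modXPow n X ^ k := by
  simpa [V_X] using
    modXPow_V_eq_of_dvd_sub X_pow_nine_dvd_oddPsiNeg_sub_X (hn.trans_eq (mul_comm ..))

lemma modXPow_X_pow {R : Type*} [CommRing R] {m n : ℕ} (h : n ≤ m) :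
    modXPow n (X : R⟦X⟧) ^ m = 0 := by
  rw [← map_pow, modXPow_eq_zero_iff]
  exact pow_dvd_pow X h

/-- The defect of the cubic modular equation for theta functions. -/
noncomputable def cubicDefect : ℤ⟦X⟧ :=
  theta₃ * V 3 theta₃ - theta₄ * V 3 theta₄ - 4 * halfTheta₂ * V 3 halfTheta₂

/-- The cofactor of `cubicDefect` in the descent relation between `cubicDefect` and
`V 2 cubicDefect`: up to signs it is the conjugate `a + b` of a factor `a - b` of
`cubicDefect`. -/
noncomputable def cubicCofactor : ℤ⟦X⟧ :=
  V 4 theta₃ * V 12 halfTheta₂ + V 4 halfTheta₂ * V 12 theta₃ + halfTheta₂ * V 3 halfTheta₂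

lemma cubicDefect_eq : cubicDefect =
    4 * (V 4 theta₃ * V 12 halfTheta₂ + V 4 halfTheta₂ * V 12 theta₃ -
      halfTheta₂ * V 3 halfTheta₂) := by
  have h₃ := congrArg (V 3) theta₃_eq_add
  have h₄ := congrArg (V 3) theta₄_eq_sub
  simp only [map_add, map_sub, map_mul, map_ofNat, V_V] at h₃ h₄
  rw [cubicDefect, h₃, h₄]
  linear_combination (V 12 theta₃ + 2 * V 12 halfTheta₂) * theta₃_eq_add -
    (V 12 theta₃ - 2 * V 12 halfTheta₂) * theta₄_eq_sub

lemma cubicDefect_mul_cubicCofactor : cubicDefect * (2 * cubicCofactor) =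
    V 2 cubicDefect * (V 2 theta₃ * V 6 theta₃ - 4 * (V 2 halfTheta₂ * V 6 halfTheta₂) +
      V 2 theta₄ * V 6 theta₄) := by
  have hV : V 2 cubicDefect = V 2 theta₃ * V 6 theta₃ - V 2 theta₄ * V 6 theta₄ -
      4 * V 2 halfTheta₂ * V 6 halfTheta₂ := by
    simp only [cubicDefect, map_sub, map_mul, map_ofNat, V_V]
  have hQ : (halfTheta₂ * V 3 halfTheta₂) ^ 2 =
      V 2 halfTheta₂ * V 2 theta₃ * (V 6 halfTheta₂ * V 6 theta₃) := by
    rw [mul_pow, ← map_pow, halfTheta₂_sq, map_mul, V_V, V_V]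
  have hS : (V 2 theta₃ * V 6 theta₃) ^ 2 = (V 4 theta₃ ^ 2 + 4 * V 4 halfTheta₂ ^ 2) *
      (V 12 theta₃ ^ 2 + 4 * V 12 halfTheta₂ ^ 2) := by
    rw [mul_pow, ← map_pow, ← map_pow, theta₃_sq]
    simp only [map_add, map_mul, map_pow, map_ofNat, V_V]
  have hP : (V 2 theta₄ * V 6 theta₄) ^ 2 = (V 4 theta₃ ^ 2 - 4 * V 4 halfTheta₂ ^ 2) *
      (V 12 theta₃ ^ 2 - 4 * V 12 halfTheta₂ ^ 2) := by
    rw [mul_pow, ← map_pow, ← map_pow, theta₄_sq]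
    simp only [map_sub, map_mul, map_pow, map_ofNat, V_V]
  have hQ₂ : (V 2 halfTheta₂ * V 6 halfTheta₂) ^ 2 =
      V 4 theta₃ * V 4 halfTheta₂ * (V 12 theta₃ * V 12 halfTheta₂) := by
    rw [mul_pow, V_two_halfTheta₂_sq, ← map_pow, halfTheta₂_sq, map_mul, V_V, V_V]
    ring
  rw [hV, cubicDefect_eq, cubicCofactor]
  linear_combination -8 * hQ - hS + hP - 16 * hQ₂

lemma cubicDefect_eq_zero : cubicDefect = 0 := by
  have hX : modXPow 9 (X : ℤ⟦X⟧) ^ 24 = 0 := modXPow_X_pow (by norm_num)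
  refine eq_zero_of_mul_eq_V_mul (n := 9) one_lt_two ?_ cubicDefect_mul_cubicCofactor
    (not_X_pow_dvd_of_modXPow_eq (r := 4) (by norm_num) ?_)
  · rw [← modXPow_eq_zero_iff, cubicDefect_eq]
    simp only [map_mul, map_sub, map_add, modXPow_V_theta₃, modXPow_V_halfTheta₂,
      modXPow_halfTheta₂, Nat.reduceLeDiff, Nat.reduceMul]
    linear_combination modXPow 9 4 * hX
  · rw [cubicCofactor]
    simp only [map_mul, map_add, map_pow, map_ofNat, modXPow_V_theta₃, modXPow_V_halfTheta₂,
      modXPow_halfTheta₂, Nat.reduceLeDiff, Nat.reduceMul]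
    linear_combination 2 * hX

lemma cubic_modular_equation_theta :
    theta₃ * V 3 theta₃ = theta₄ * V 3 theta₄ + 4 * halfTheta₂ * V 3 halfTheta₂ := by
  have h := cubicDefect_eq_zero
  rw [cubicDefect] at h
  linear_combination h

lemma oddPsiNeg_mul_V_three_sq : (oddPsiNeg * V 3 oddPsiNeg) ^ 2 =
    theta₄ * halfTheta₂ * (V 3 theta₄ * V 3 halfTheta₂) := by
  rw [mul_pow, ← map_pow, oddPsiNeg_sq, map_mul]

lemma cubic_modular_equation_oddPsiNeg :
    halfTheta₂ ^ 2 * V 3 theta₄ ^ 2 + theta₄ ^ 2 * V 3 halfTheta₂ ^ 2 =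
      oddPsiNeg * V 3 oddPsiNeg * (theta₄ * V 3 theta₄ + 4 * halfTheta₂ * V 3 halfTheta₂) := by
  have h₃ := congrArg (V 3) theta₃_pow_four
  simp only [map_mul, map_pow, map_add, map_ofNat] at h₃
  have hfour : (theta₄ * V 3 theta₄ + 4 * halfTheta₂ * V 3 halfTheta₂) ^ 4 =
      (theta₄ ^ 4 + 16 * halfTheta₂ ^ 4) * (V 3 theta₄ ^ 4 + 16 * V 3 halfTheta₂ ^ 4) := by
    rw [← cubic_modular_equation_theta, mul_pow, theta₃_pow_four, h₃]
  have hsq : (16 : ℤ⟦X⟧) *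
      (halfTheta₂ ^ 2 * V 3 theta₄ ^ 2 + theta₄ ^ 2 * V 3 halfTheta₂ ^ 2) ^ 2 = 16 *
      (oddPsiNeg * V 3 oddPsiNeg *
        (theta₄ * V 3 theta₄ + 4 * halfTheta₂ * V 3 halfTheta₂)) ^ 2 := by
    rw [mul_pow (oddPsiNeg * _), oddPsiNeg_mul_V_three_sq]
    linear_combination -hfour
  refine (sq_eq_sq_iff_eq_or_eq_neg.1 (mul_left_cancel₀ (OfNat.ofNat_ne_zero 16) hsq)).resolve_right
    fun hneg => ?_
  -- The sign is read off from the coefficient of `X ^ 4`.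
  have hX : modXPow 5 (X : ℤ⟦X⟧) ^ 6 = 0 := modXPow_X_pow (by norm_num)
  have hmod := congrArg (modXPow 5) hneg
  simp only [map_add, map_mul, map_pow, map_neg, map_ofNat, modXPow_V_theta₄, modXPow_V_halfTheta₂,
    modXPow_halfTheta₂, modXPow_theta₄, modXPow_oddPsiNeg, modXPow_V_oddPsiNeg, Nat.reduceLeDiff,
    Nat.reduceMul] at hmod
  refine not_X_pow_dvd_of_modXPow_eq (n := 4) (f := (2 * X ^ 4 : ℤ⟦X⟧)) (r := 2) two_ne_zero
    (by simp) (modXPow_eq_zero_iff.1 ?_)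
  simp only [map_mul, map_pow, map_ofNat]
  linear_combination hmod - 5 * modXPow 5 X ^ 6 * hX

lemma theta₄_ne_zero : theta₄ ≠ 0 := by
  refine ne_zero_of_modXPow_eq (n := 0) one_ne_zero ?_
  rw [modXPow_theta₄ (by norm_num)]
  simp

lemma V_injective {R : Type*} [CommRing R] {k : ℕ} [NeZero k] :
    Function.Injective (V k : R⟦X⟧ →ₐ[R] R⟦X⟧) := fun f g h => by
  ext n
  rw [← coeff_expand_mul k (NeZero.ne k) f, h, coeff_expand_mul]

lemma V_ne_zero {R : Type*} [CommRing R] {k : ℕ} [NeZero k] {f : R⟦X⟧} (hf : f ≠ 0) : V k f ≠ 0 :=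
  (map_ne_zero_iff _ V_injective).2 hf

lemma halfTheta₂_eq : halfTheta₂ = regSeries ^ 2 * theta₄ := by
  refine mul_left_cancel₀ theta₄_ne_zero ?_
  rw [← oddPsiNeg_sq, ← regSeries_mul_theta₄]
  ring

lemma cubic_modular_equation : regSeries ^ 4 + V 3 regSeries ^ 4 =
    regSeries * V 3 regSeries + 4 * regSeries ^ 3 * V 3 regSeries ^ 3 := by
  have h := cubic_modular_equation_oddPsiNeg
  rw [halfTheta₂_eq, ← regSeries_mul_theta₄] at h
  simp only [map_mul, map_pow] at h
  refine mul_left_cancel₀ (mul_ne_zero (pow_ne_zero 2 theta₄_ne_zero)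
    (pow_ne_zero 2 (V_ne_zero (k := 3) theta₄_ne_zero))) ?_
  linear_combination h

/-! ### The derivation `q d/dq` -/

section QDeriv

variable {R : Type*} [CommRing R]

/-- The derivation `f ↦ q df/dq` of `R⟦q⟧`. -/
noncomputable def qDeriv : Derivation R R⟦X⟧ R⟦X⟧ := (X : R⟦X⟧) • PowerSeries.derivative R

lemma coeff_qDeriv (f : R⟦X⟧) (n : ℕ) : coeff n (qDeriv f) = n * coeff n f := by
  rw [qDeriv, Derivation.smul_apply, smul_eq_mul]
  cases n with
  | zero => simp
  | succ n => rw [coeff_succ_X_mul, coeff_derivative, mul_comm, Nat.cast_succ]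

lemma qDeriv_mul (f g : R⟦X⟧) : qDeriv (f * g) = f * qDeriv g + g * qDeriv f :=
  Derivation.leibniz ..

lemma qDeriv_pow (f : R⟦X⟧) (n : ℕ) : qDeriv (f ^ n) = n * f ^ (n - 1) * qDeriv f := by
  rw [Derivation.leibniz_pow, nsmul_eq_mul, smul_eq_mul, mul_assoc]

lemma qDeriv_ofNat (n : ℕ) [n.AtLeastTwo] : qDeriv (ofNat(n) : R⟦X⟧) = 0 :=
  Derivation.map_natCast qDeriv n

lemma qDeriv_X_pow (n : ℕ) : qDeriv ((X : R⟦X⟧) ^ n) = n * (X : R⟦X⟧) ^ n := by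
  ext k
  rw [coeff_qDeriv, ← map_natCast (C (R := R)), coeff_C_mul, coeff_X_pow]
  split_ifs with h
  · rw [h]
  · rw [mul_zero, mul_zero]

lemma qDeriv_V (k : ℕ) [NeZero k] (f : R⟦X⟧) : qDeriv (V k f) = k * V k (qDeriv f) := by
  ext n
  rw [coeff_qDeriv, ← map_natCast (C (R := R)), coeff_C_mul, coeff_expand, coeff_expand]
  split_ifs with h
  · obtain ⟨m, rfl⟩ := h
    rw [Nat.mul_div_cancel_left _ (NeZero.pos k), coeff_qDeriv]
    push_cast
    ring
  · rw [mul_zero, mul_zero]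

lemma modXPow_qDeriv {n : ℕ} {f g : R⟦X⟧} (h : modXPow n f = modXPow n g) :
    modXPow n (qDeriv f) = modXPow n (qDeriv g) := by
  rw [← sub_eq_zero, ← map_sub, modXPow_eq_zero_iff, X_pow_dvd_iff] at h ⊢
  intro m hm
  rw [← map_sub, coeff_qDeriv, h m hm, mul_zero]

end QDeriv

lemma theta₃_sq_add_theta₄_sq : theta₃ ^ 2 + theta₄ ^ 2 = 2 * V 2 theta₃ ^ 2 := by
  rw [theta₃_sq, theta₄_sq]
  ring

lemma theta₃_sq_sub_theta₄_sq : theta₃ ^ 2 - theta₄ ^ 2 = 8 * V 2 halfTheta₂ ^ 2 := by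
  rw [theta₃_sq, theta₄_sq]
  ring

/-- The Wronskian of `θ₃` and `θ₄` with respect to `q d/dq`. -/
noncomputable def thetaWronskian : ℤ⟦X⟧ := theta₃ * qDeriv theta₄ - theta₄ * qDeriv theta₃

lemma V_two_thetaWronskian : V 2 theta₃ * V 2 theta₄ * V 2 thetaWronskian =
    V 2 halfTheta₂ ^ 2 * thetaWronskian := by
  have hV : 2 * V 2 thetaWronskian =
      V 2 theta₃ * qDeriv (V 2 theta₄) - V 2 theta₄ * qDeriv (V 2 theta₃) := by
    simp only [thetaWronskian, map_sub, map_mul, qDeriv_V, Nat.cast_ofNat]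
    ring
  have hmul := congrArg qDeriv theta₄_mul_theta₃
  have hadd := congrArg qDeriv theta₃_sq_add_theta₄_sq
  simp only [map_add, qDeriv_mul, qDeriv_pow, qDeriv_ofNat, Nat.cast_ofNat, Nat.add_one_sub_one,
    pow_one, mul_zero, add_zero] at hmul hadd
  refine mul_left_cancel₀ (OfNat.ofNat_ne_zero 8) ?_
  rw [thetaWronskian] at hV ⊢
  linear_combination 4 * V 2 theta₃ * V 2 theta₄ * hV - 2 * V 2 theta₃ ^ 2 * hmul +
    V 2 theta₄ ^ 2 * hadd - (theta₄ * qDeriv theta₃ + theta₃ * qDeriv theta₄) *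
      theta₃_sq_add_theta₄_sq +
    (2 * theta₃ * qDeriv theta₃ + 2 * theta₄ * qDeriv theta₄) * theta₄_mul_theta₃ +
    (theta₃ * qDeriv theta₄ - theta₄ * qDeriv theta₃) * theta₃_sq_sub_theta₄_sq

lemma modXPow_nine_theta₃ : modXPow 9 theta₃ = modXPow 9 (1 + 2 * X ^ 8) := by
  rw [theta₃_eq_add]
  simp only [map_add, map_mul, map_pow, map_one, modXPow_V_theta₃, modXPow_V_halfTheta₂,
    Nat.reduceLeDiff, Nat.reduceMul]

lemma modXPow_nine_theta₄ : modXPow 9 theta₄ = modXPow 9 (1 - 2 * X ^ 8) := by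
  rw [theta₄_eq_sub]
  simp only [map_sub, map_mul, map_pow, map_one, modXPow_V_theta₃, modXPow_V_halfTheta₂,
    Nat.reduceLeDiff, Nat.reduceMul]

lemma thetaWronskian_eq : thetaWronskian = -32 * theta₃ * theta₄ * halfTheta₂ ^ 4 := by
  rw [neg_mul, neg_mul, neg_mul, ← add_eq_zero_iff_eq_neg]
  refine eq_zero_of_mul_eq_V_mul (A := V 2 halfTheta₂ ^ 2) (B := V 2 theta₃ * V 2 theta₄) (n := 9)
    one_lt_two ?_ ?_ (not_X_pow_dvd_of_modXPow_eq (r := 1) one_ne_zero ?_)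
  · have hX : modXPow 9 (X : ℤ⟦X⟧) ^ 16 = 0 := modXPow_X_pow (by norm_num)
    have h₃ := modXPow_qDeriv modXPow_nine_theta₃
    have h₄ := modXPow_qDeriv modXPow_nine_theta₄
    simp only [map_add, map_sub, qDeriv_mul, qDeriv_ofNat, qDeriv_X_pow,
      Derivation.map_one_eq_zero] at h₃ h₄
    rw [← modXPow_eq_zero_iff, thetaWronskian]
    simp only [map_add, map_sub, map_mul, h₃, h₄, modXPow_nine_theta₃, modXPow_nine_theta₄, map_pow,
      modXPow_halfTheta₂, map_ofNat, map_one, map_zero, map_natCast, Nat.reduceLeDiff]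
    push_cast
    linear_combination (-128 : ℤ⟦X⟧ ⧸ Ideal.span {(X : ℤ⟦X⟧) ^ 9}) * modXPow 9 X ^ 8 * hX
  · simp only [map_add, map_mul, map_pow, map_ofNat]
    linear_combination -V_two_thetaWronskian + 32 * theta₃ * theta₄ * V 2 halfTheta₂ ^ 2 *
      (halfTheta₂ ^ 2 + V 2 halfTheta₂ * V 2 theta₃) * halfTheta₂_sq +
      32 * V 2 halfTheta₂ ^ 4 * V 2 theta₃ ^ 2 * theta₄_mul_theta₃
  · simp only [map_pow, map_one, one_mul, modXPow_V_halfTheta₂, Nat.reduceLeDiff,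
      Nat.reduceMul]
    ring

lemma theta₃_pow_four_eq : theta₃ ^ 4 = theta₄ ^ 4 * (1 + 16 * regSeries ^ 8) := by
  rw [theta₃_pow_four, halfTheta₂_eq]
  ring

lemma modXPow_two_regSeries : modXPow 2 regSeries = modXPow 2 X := by
  have h := congrArg (modXPow 2) regSeries_mul_theta₄
  rwa [map_mul, modXPow_theta₄ (by norm_num), mul_one, modXPow_oddPsiNeg (by norm_num)] at h

lemma regSeries_ne_zero : regSeries ≠ 0 :=
  ne_zero_of_modXPow_eq (n := 1) one_ne_zero (by simp [modXPow_two_regSeries])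

lemma qDeriv_regSeries :
    qDeriv regSeries = regSeries * (theta₄ ^ 4 * (1 + 16 * regSeries ^ 8)) := by
  have hpow := congrArg qDeriv theta₃_pow_four_eq
  simp only [map_add, qDeriv_ofNat, qDeriv_mul, qDeriv_pow, Derivation.map_one_eq_zero,
    Nat.cast_ofNat, Nat.add_one_sub_one, mul_zero, add_zero, zero_add] at hpow
  have hw := thetaWronskian_eq
  rw [thetaWronskian, halfTheta₂_eq] at hw
  refine mul_left_cancel₀ (mul_ne_zero (OfNat.ofNat_ne_zero 128)
    (mul_ne_zero (pow_ne_zero 7 regSeries_ne_zero) (pow_ne_zero 5 theta₄_ne_zero))) ?_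
  linear_combination -theta₄ * hpow + 4 * qDeriv theta₄ * theta₃_pow_four_eq -
    4 * theta₃ ^ 3 * hw + 128 * regSeries ^ 8 * theta₄ ^ 5 * theta₃_pow_four_eq

/-! ### Identities of level three -/

lemma modXPow_V_three_regSeries {n : ℕ} (hn : n ≤ 3) : modXPow n (V 3 regSeries) = 0 := by
  have h : modXPow n (V 3 regSeries) = modXPow n (V 3 X) :=
    modXPow_V_eq_of_dvd_sub (m := 2) (modXPow_eq_zero_iff.1 <| by
      rw [map_sub, modXPow_two_regSeries, sub_self]) (hn.trans (by norm_num))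
  rw [h, V_X, map_pow, modXPow_X_pow hn]

lemma theta₄_sq_mul_regSeries_add_ne_zero : theta₄ ^ 2 * regSeries +
    V 3 theta₄ ^ 2 * (regSeries - 4 * V 3 regSeries ^ 3) ≠ 0 := by
  refine ne_zero_of_modXPow_eq (n := 1) two_ne_zero ?_
  simp only [map_add, map_mul, map_sub, map_pow, map_ofNat, modXPow_theta₄, modXPow_V_theta₄,
    modXPow_V_three_regSeries, modXPow_two_regSeries, Nat.reduceLeDiff, Nat.reduceMul,
    Nat.reduceAdd]
  ring

lemma cubic_modular_equation_deriv_ne_zero :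
    regSeries + 12 * regSeries ^ 3 * V 3 regSeries ^ 2 - 4 * V 3 regSeries ^ 3 ≠ 0 := by
  refine ne_zero_of_modXPow_eq (n := 1) one_ne_zero ?_
  simp only [map_add, map_mul, map_sub, map_pow, map_one, modXPow_V_three_regSeries,
    modXPow_two_regSeries, Nat.reduceLeDiff, Nat.reduceAdd]
  ring

lemma one_add_V_three_regSeries_ne_zero : 1 + 16 * V 3 regSeries ^ 8 ≠ 0 := by
  refine ne_zero_of_modXPow_eq (n := 0) one_ne_zero ?_
  simp [modXPow_V_three_regSeries]

/- Logarithmic differentiation of the cubic modular equation gives the square of this identity, up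
to a nonzero factor. -/
lemma theta₄_sq_mul_regSeries :
    theta₄ ^ 2 * regSeries = V 3 theta₄ ^ 2 * (regSeries - 4 * V 3 regSeries ^ 3) := by
  have hderiv := congrArg qDeriv cubic_modular_equation
  simp only [map_add, qDeriv_ofNat, qDeriv_mul, qDeriv_pow, qDeriv_V, qDeriv_regSeries, map_mul,
    map_pow, map_one, map_ofNat, Nat.cast_ofNat, Nat.add_one_sub_one, mul_zero,
    add_zero] at hderiv
  have hmul :
      (3 * V 3 regSeries * (regSeries + 12 * regSeries ^ 3 * V 3 regSeries ^ 2 -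
        4 * V 3 regSeries ^ 3) * (1 + 16 * V 3 regSeries ^ 8)) *
      ((theta₄ ^ 2 * regSeries + V 3 theta₄ ^ 2 * (regSeries - 4 * V 3 regSeries ^ 3)) *
        (theta₄ ^ 2 * regSeries - V 3 theta₄ ^ 2 * (regSeries - 4 * V 3 regSeries ^ 3))) = 0 := by
    have hcubic := cubic_modular_equation
    generalize V 3 regSeries = t at hderiv hcubic ⊢
    generalize V 3 theta₄ = P₃ at hderiv ⊢
    generalize regSeries = s at hderiv hcubic ⊢
    generalize theta₄ = P at hderiv ⊢
    linear_combination (s - 4 * t ^ 3) ^ 2 * hderiv - P ^ 4 * (4 * s ^ 2 - 16 * s * t ^ 3 +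
      192 * s ^ 2 * t ^ 8 - 48 * s ^ 3 * t ^ 5 + 48 * s ^ 4 * t ^ 2 + 192 * s ^ 5 * t ^ 7 -
      192 * s ^ 6 * t ^ 4 + 48 * s ^ 7 * t + 768 * s ^ 8 * t ^ 6 - 448 * s ^ 9 * t ^ 3 +
      64 * s ^ 10) * hcubic
  have hne : 3 * V 3 regSeries * (regSeries + 12 * regSeries ^ 3 * V 3 regSeries ^ 2 -
      4 * V 3 regSeries ^ 3) * (1 + 16 * V 3 regSeries ^ 8) ≠ 0 :=
    mul_ne_zero (mul_ne_zero (mul_ne_zero (OfNat.ofNat_ne_zero 3) (V_ne_zero regSeries_ne_zero))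
      cubic_modular_equation_deriv_ne_zero) one_add_V_three_regSeries_ne_zero
  exact sub_eq_zero.1 <| (mul_eq_zero.1 <| (mul_eq_zero.1 hmul).resolve_left hne).resolve_left
    theta₄_sq_mul_regSeries_add_ne_zero

lemma four_mul_regSeries_pow_three_mul_theta₄_sq : 4 * regSeries ^ 3 * theta₄ ^ 2 =
    V 3 regSeries * (theta₄ ^ 2 + 3 * V 3 theta₄ ^ 2) := by
  refine mul_left_cancel₀ regSeries_ne_zero ?_
  linear_combination (4 * regSeries ^ 3 - V 3 regSeries) * theta₄_sq_mul_regSeries +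
    4 * V 3 theta₄ ^ 2 * cubic_modular_equation

lemma V_three_theta₄_sq_mul_regSeries : V 3 theta₄ ^ 2 * regSeries * V 3 regSeries =
    V 3 theta₄ ^ 2 * V 3 regSeries ^ 4 + theta₄ ^ 2 * regSeries ^ 4 := by
  linear_combination -regSeries ^ 3 * theta₄_sq_mul_regSeries -
    V 3 theta₄ ^ 2 * cubic_modular_equation

lemma theta₄_sq_mul_regSeries_mul_V_three : theta₄ ^ 2 * regSeries * V 3 regSeries =
    theta₄ ^ 2 * regSeries ^ 4 - 3 * V 3 regSeries ^ 4 * V 3 theta₄ ^ 2 := by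
  linear_combination (V 3 regSeries - regSeries ^ 3) * theta₄_sq_mul_regSeries -
    V 3 theta₄ ^ 2 * cubic_modular_equation

/-! ### The operator `U_p` -/

section U

variable {R : Type*} [CommRing R]

/-- The operator `U_p : ∑ a(n) q ^ n ↦ ∑ a(p * n) q ^ n`. -/
noncomputable def U (p : ℕ) : R⟦X⟧ →ₗ[R] R⟦X⟧ where
  toFun f := PowerSeries.mk fun n => coeff (p * n) f
  map_add' _ _ := by ext; simp only [map_add, coeff_mk]
  map_smul' _ _ := by ext; simp only [coeff_smul, coeff_mk, smul_eq_mul, RingHom.id_apply]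

lemma coeff_U (p n : ℕ) (f : R⟦X⟧) : coeff n (U p f) = coeff (p * n) f := by
  simp [U]

lemma U_ofNat_mul (p n : ℕ) [n.AtLeastTwo] (f : R⟦X⟧) :
    U p (ofNat(n) * f) = ofNat(n) * U p f := by
  rw [← map_ofNat C n, ← smul_eq_C_mul, map_smul, smul_eq_C_mul]

lemma coeff_iterate_U (p n m : ℕ) (f : R⟦X⟧) : coeff m ((U p)^[n] f) = coeff (p ^ n * m) f := by
  induction n generalizing m with
  | zero => simp
  | succ n ih => rw [Function.iterate_succ_apply', coeff_U, ih, pow_succ, mul_assoc]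

variable (p : ℕ) [NeZero p]

lemma U_mul_V (f g : R⟦X⟧) : U p (f * V p g) = U p f * g := by
  have hp : p ≠ 0 := NeZero.ne p
  ext n
  rw [coeff_U, coeff_mul, coeff_mul]
  refine (sum_of_injOn (fun x => (p * x.1, p * x.2)) ?_ ?_ ?_ ?_).symm
  · rintro ⟨i, j⟩ - ⟨i', j'⟩ - h
    simpa [hp] using h
  · rintro ⟨i, j⟩ hij
    rw [mem_coe, HasAntidiagonal.mem_antidiagonal] at hij ⊢
    rw [← mul_add, hij]
  · rintro ⟨i, j⟩ hij hne
    rw [HasAntidiagonal.mem_antidiagonal] at hij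
    rw [coeff_expand_of_not_dvd, mul_zero]
    rintro ⟨l, rfl⟩
    obtain ⟨k, rfl⟩ : p ∣ i := (Nat.dvd_add_left (dvd_mul_right p l)).1 (hij ▸ dvd_mul_right p n)
    rw [← mul_add] at hij
    exact hne ⟨(k, l), HasAntidiagonal.mem_antidiagonal.2 (mul_left_cancel₀ hp hij), rfl⟩
  · rintro ⟨i, j⟩ -
    rw [coeff_U, coeff_expand_mul]

lemma U_V_mul (f g : R⟦X⟧) : U p (V p f * g) = f * U p g := by
  rw [mul_comm, U_mul_V, mul_comm]

lemma U_one : U p (1 : R⟦X⟧) = 1 := by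
  ext n
  rw [coeff_U, coeff_one, coeff_one]
  simp [NeZero.ne p]

lemma U_V (f : R⟦X⟧) : U p (V p f) = f := by
  rw [← mul_one (V p f), U_V_mul, U_one, mul_one]

end U

section SupportedMod

variable {R : Type*} [CommRing R] {m r s : ℕ} {f g : R⟦X⟧}

/-- The exponents occurring in the series `f` are all congruent to `r` modulo `m`. -/
def IsSupportedMod (m r : ℕ) (f : R⟦X⟧) : Prop := ∀ n, coeff n f ≠ 0 → n ≡ r [MOD m]

lemma IsSupportedMod.mul (hf : IsSupportedMod m r f) (hg : IsSupportedMod m s g) :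
    IsSupportedMod m (r + s) (f * g) := by
  intro n hn
  rw [coeff_mul] at hn
  obtain ⟨⟨i, j⟩, hij, hne⟩ := exists_ne_zero_of_sum_ne_zero hn
  rw [← HasAntidiagonal.mem_antidiagonal.1 hij]
  exact (hf i (left_ne_zero_of_mul hne)).add (hg j (right_ne_zero_of_mul hne))

lemma IsSupportedMod.map {S : Type*} [CommRing S] (hf : IsSupportedMod m r f) (φ : R →+* S) :
    IsSupportedMod m r (PowerSeries.map φ f) := by
  intro n hn
  rw [coeff_map] at hn
  exact hf n (ne_zero_of_map hn)

lemma isSupportedMod_V (m : ℕ) [NeZero m] (f : R⟦X⟧) : IsSupportedMod m 0 (V m f) := by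
  intro n hn
  rw [V, coeff_expand] at hn
  exact Nat.modEq_zero_iff_dvd.2 (not_imp_comm.1 (if_neg ·) hn)

lemma IsSupportedMod.U_eq_zero (hf : IsSupportedMod m r f) (hr : ¬ m ∣ r) : U m f = 0 := by
  ext n
  rw [coeff_U, map_zero]
  by_contra hne
  exact hr (((hf _ hne).dvd_iff dvd_rfl).1 (dvd_mul_right m n))

variable {p : ℕ} [NeZero p] {ε : R}

lemma U_eq_of_isSupportedMod (hf : IsSupportedMod p r (f - C ε * V p (V p f))) (hr : ¬ p ∣ r) :
    U p f = C ε * V p f := by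
  have h := hf.U_eq_zero hr
  rwa [← smul_eq_C_mul, map_sub, map_smul, U_V, sub_eq_zero, smul_eq_C_mul] at h

lemma U_sq_of_isSupportedMod (hf : IsSupportedMod p r (f - C ε * V p (V p f))) (hr : ¬ p ∣ r)
    (hr₂ : ¬ p ∣ r + r) : U p (f ^ 2) = C (ε ^ 2) * V p f ^ 2 := by
  set g := f - C ε * V p (V p f) with hg
  have hV : V p (C ε) = C ε := expand_C ..
  have hsq : f ^ 2 = V p (C (ε ^ 2) * V p f ^ 2) + V p (2 * C ε * V p f) * g + g * g := by
    simp only [hg, map_mul, map_pow, map_ofNat, hV]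
    ring
  rw [hsq, map_add, map_add, U_V, U_V_mul, hf.U_eq_zero hr, (hf.mul hf).U_eq_zero hr₂]
  ring

/- The exponents divisible by `p` are the `e (p * j + m)`, and they reproduce the series itself. -/
lemma isSupportedMod_sparseSeries_sub {a : ℕ → R} {e : ℕ → ℕ} (he : StrictMono e)
    (he_class : ∀ j, e (p * j + m) = p * (p * e j)) (ha_class : ∀ j, a (p * j + m) = ε * a j)
    (he_other : ∀ k, k % p ≠ m → e k ≡ r [MOD p]) :
    IsSupportedMod p r (sparseSeries a e - C ε * V p (V p (sparseSeries a e))) := by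
  have hp : 0 < p := NeZero.pos p
  have hpe : StrictMono fun k => p * e k := strictMono_const_mul he hp
  have hppe : StrictMono fun k => p * (p * e k) := strictMono_const_mul hpe hp
  intro n hn
  rw [V_sparseSeries he, V_sparseSeries hpe, map_sub, coeff_C_mul] at hn
  contrapose! hn
  by_cases h : ∃ k, e k = n
  · obtain ⟨k, rfl⟩ := h
    have hk : k % p = m := by
      by_contra hk
      exact hn (he_other k hk)
    obtain ⟨j, rfl⟩ : ∃ j, k = p * j + m := ⟨k / p, by rw [← hk, Nat.div_add_mod]⟩
    rw [coeff_sparseSeries he, ha_class, he_class, coeff_sparseSeries hppe, sub_self]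
  · push Not at h
    rw [coeff_sparseSeries_eq_zero h, coeff_sparseSeries_eq_zero, mul_zero, sub_self]
    exact fun j hj => h _ ((he_class j).trans hj)

end SupportedMod

lemma isSupportedMod_theta₄_sub :
    IsSupportedMod 3 2 (theta₄ - C 1 * V 3 (V 3 theta₄)) := by
  refine isSupportedMod_sparseSeries_sub (m := 0) strictMono_eight_mul_sq
    (fun j => by ring) (fun j => ?_) fun k hk => ?_
  · rcases j.eq_zero_or_pos with rfl | hj
    · simp
    · simp [phiNegCoeff, hj.ne', pow_mul]
  · obtain h | h : k % 3 = 1 ∨ k % 3 = 2 := by lia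
    all_goals simp [Nat.ModEq, Nat.mul_mod, Nat.pow_mod, h]

lemma isSupportedMod_halfTheta₂_sub :
    IsSupportedMod 3 2 (halfTheta₂ - C 1 * V 3 (V 3 halfTheta₂)) := by
  refine isSupportedMod_sparseSeries_sub (m := 1) strictMono_two_mul_odd_sq
    (fun j => by ring) (fun _ => (one_mul 1).symm) fun k hk => ?_
  obtain h | h : k % 3 = 0 ∨ k % 3 = 2 := by lia
  all_goals simp [Nat.ModEq, Nat.mul_mod, Nat.pow_mod, Nat.add_mod, h]

lemma isSupportedMod_oddPsiNeg_sub :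
    IsSupportedMod 3 1 (oddPsiNeg - C (-1) * V 3 (V 3 oddPsiNeg)) := by
  refine isSupportedMod_sparseSeries_sub (m := 1) strictMono_odd_sq
    (fun j => by ring) (fun j => ?_) fun k hk => ?_
  · have h : (3 * j + 1) * (3 * j + 1 + 1) / 2 = 4 * (j * (j + 1)) + j * (j + 1) / 2 + 1 := by
      have := two_mul_triangle j
      lia
    rw [h, pow_succ, pow_add, mul_assoc, pow_mul]
    norm_num
  · obtain h | h : k % 3 = 0 ∨ k % 3 = 2 := by lia
    all_goals simp [Nat.ModEq, Nat.mul_mod, Nat.pow_mod, Nat.add_mod, h]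

lemma U_theta₄ : U 3 theta₄ = V 3 theta₄ := by
  simpa using U_eq_of_isSupportedMod isSupportedMod_theta₄_sub (by norm_num)

lemma U_oddPsiNeg : U 3 oddPsiNeg = -V 3 oddPsiNeg := by
  simpa using U_eq_of_isSupportedMod isSupportedMod_oddPsiNeg_sub (by norm_num)

lemma U_theta₄_sq : U 3 (theta₄ ^ 2) = V 3 theta₄ ^ 2 := by
  simpa using U_sq_of_isSupportedMod isSupportedMod_theta₄_sub (by norm_num) (by norm_num)

lemma U_halfTheta₂_sq : U 3 (halfTheta₂ ^ 2) = V 3 halfTheta₂ ^ 2 := by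
  simpa using U_sq_of_isSupportedMod isSupportedMod_halfTheta₂_sub (by norm_num) (by norm_num)

lemma U_oddPsiNeg_sq : U 3 (oddPsiNeg ^ 2) = V 3 oddPsiNeg ^ 2 := by
  simpa using U_sq_of_isSupportedMod isSupportedMod_oddPsiNeg_sub (by norm_num) (by norm_num)

/-! ### The Hecke operator `T_3` -/

/-- The series `3 T_3(θ₄ ^ (2 * k) F ^ a)`, where `T_3 = U_3 + (-1) ^ k 3 ^ (k - 1) V_3` is the
Hecke operator in weight `k` with character `(-4 / ·) ^ k`. -/
noncomputable def threeHecke (k a : ℕ) : ℤ⟦X⟧ :=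
  3 * U 3 (theta₄ ^ (2 * k) * regSeries ^ a) + (-3) ^ k * V 3 (theta₄ ^ (2 * k) * regSeries ^ a)

lemma threeHecke_succ_succ (k a : ℕ) : threeHecke (k + 1) (a + 1) =
    theta₄ ^ 2 * threeHecke k (a + 1) - 4 * (regSeries ^ 3 * theta₄ ^ 2 * threeHecke k a) := by
  have h : theta₄ ^ (2 * (k + 1)) * regSeries ^ (a + 1) =
      V 3 (theta₄ ^ 2) * (theta₄ ^ (2 * k) * regSeries ^ (a + 1)) -
        4 * (V 3 (theta₄ ^ 2 * regSeries ^ 3) * (theta₄ ^ (2 * k) * regSeries ^ a)) := by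
    simp only [map_mul, map_pow]
    linear_combination theta₄ ^ (2 * k) * regSeries ^ a * theta₄_sq_mul_regSeries
  have hU := congrArg (U 3) h
  rw [map_sub, U_ofNat_mul, U_V_mul, U_V_mul] at hU
  simp only [threeHecke, map_mul, map_pow]
  linear_combination 3 * hU + (-3) ^ k * V 3 theta₄ ^ (2 * k) * V 3 regSeries ^ a *
    four_mul_regSeries_pow_three_mul_theta₄_sq

lemma threeHecke_succ_add_four (k a : ℕ) : threeHecke (k + 1) (a + 4) =
    regSeries * theta₄ ^ 2 * threeHecke k (a + 1) -
      regSeries ^ 4 * theta₄ ^ 2 * threeHecke k a := by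
  have h : theta₄ ^ (2 * (k + 1)) * regSeries ^ (a + 4) =
      V 3 (theta₄ ^ 2 * regSeries) * (theta₄ ^ (2 * k) * regSeries ^ (a + 1)) -
        V 3 (theta₄ ^ 2 * regSeries ^ 4) * (theta₄ ^ (2 * k) * regSeries ^ a) := by
    simp only [map_mul, map_pow]
    linear_combination -theta₄ ^ (2 * k) * regSeries ^ a * V_three_theta₄_sq_mul_regSeries
  have hU := congrArg (U 3) h
  rw [map_sub, U_V_mul, U_V_mul] at hU
  simp only [threeHecke, map_mul, map_pow]
  linear_combination 3 * hU - (-3) ^ k * V 3 theta₄ ^ (2 * k) * V 3 regSeries ^ a *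
    theta₄_sq_mul_regSeries_mul_V_three

lemma regSeries_mul_threeHecke_succ_zero (k : ℕ) : regSeries * threeHecke (k + 1) 0 =
    4 * threeHecke (k + 1) 3 - 3 * (regSeries * theta₄ ^ 2 * threeHecke k 0) := by
  have h : 4 * (theta₄ ^ (2 * (k + 1)) * regSeries ^ 3) =
      V 3 regSeries * (theta₄ ^ (2 * (k + 1)) * regSeries ^ 0) +
        3 * (V 3 (regSeries * theta₄ ^ 2) * (theta₄ ^ (2 * k) * regSeries ^ 0)) := by
    simp only [map_mul, map_pow]
    linear_combination theta₄ ^ (2 * k) * four_mul_regSeries_pow_three_mul_theta₄_sq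
  have hU := congrArg (U 3) h
  rw [U_ofNat_mul, map_add, U_V_mul, U_ofNat_mul, U_V_mul] at hU
  simp only [threeHecke, map_mul, map_pow]
  linear_combination -3 * hU + 3 * (-3) ^ k * V 3 theta₄ ^ (2 * k) * theta₄_sq_mul_regSeries

lemma threeHecke_succ_add_four_eq_add (k a : ℕ) : threeHecke (k + 1) (a + 4) =
    regSeries * threeHecke (k + 1) (a + 1) + 3 * (regSeries ^ 4 * theta₄ ^ 2 * threeHecke k a) := by
  have h : theta₄ ^ (2 * (k + 1)) * regSeries ^ (a + 4) =
      V 3 regSeries * (theta₄ ^ (2 * (k + 1)) * regSeries ^ (a + 1)) +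
        3 * (V 3 (regSeries ^ 4 * theta₄ ^ 2) * (theta₄ ^ (2 * k) * regSeries ^ a)) := by
    simp only [map_mul, map_pow]
    linear_combination -theta₄ ^ (2 * k) * regSeries ^ a * theta₄_sq_mul_regSeries_mul_V_three
  have hU := congrArg (U 3) h
  rw [map_add, U_V_mul, U_ofNat_mul, U_V_mul] at hU
  simp only [threeHecke, map_mul, map_pow]
  linear_combination 3 * hU + 3 * (-3) ^ k * V 3 theta₄ ^ (2 * k) * V 3 regSeries ^ a *
    V_three_theta₄_sq_mul_regSeries

lemma threeHecke_zero_zero : threeHecke 0 0 = 4 := by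
  norm_num [threeHecke, U_one]

lemma threeHecke_one_zero : threeHecke 1 0 = 0 := by
  simp [threeHecke, U_theta₄_sq]

lemma threeHecke_one_two : threeHecke 1 2 = 0 := by
  have h : theta₄ ^ (2 * 1) * regSeries ^ 2 = oddPsiNeg ^ 2 := by
    rw [← regSeries_mul_theta₄]
    ring
  rw [threeHecke, h, U_oddPsiNeg_sq, map_pow]
  ring

lemma threeHecke_one_four : threeHecke 1 4 = 0 := by
  have h : theta₄ ^ (2 * 1) * regSeries ^ 4 = halfTheta₂ ^ 2 := by
    rw [halfTheta₂_eq]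
    ring
  rw [threeHecke, h, U_halfTheta₂_sq, map_pow]
  ring

lemma threeHecke_one_three : threeHecke 1 3 = 3 * (regSeries * theta₄ ^ 2) := by
  have h := regSeries_mul_threeHecke_succ_zero 0
  rw [zero_add, threeHecke_one_zero, threeHecke_zero_zero] at h
  refine mul_left_cancel₀ (OfNat.ofNat_ne_zero 4) ?_
  linear_combination -h

lemma threeHecke_one_one : threeHecke 1 1 = -(12 * (regSeries ^ 3 * theta₄ ^ 2)) := by
  have h := threeHecke_succ_add_four_eq_add 0 0
  rw [zero_add, zero_add, threeHecke_one_four, threeHecke_zero_zero] at h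
  refine mul_left_cancel₀ regSeries_ne_zero ?_
  linear_combination -h

/-- The span of the monomials `θ₄ ^ (2 * k) F ^ i` with `i ≤ d` and `i ≡ c` modulo `8`. -/
noncomputable def monomialSpan (k c d : ℕ) : Submodule ℤ ℤ⟦X⟧ :=
  Submodule.span ℤ ((fun i => theta₄ ^ (2 * k) * regSeries ^ i) '' {i | i ≤ d ∧ i ≡ c [MOD 8]})

variable {k c d : ℕ}

lemma monomial_mem_monomialSpan {i : ℕ} (hd : i ≤ d) (hc : i ≡ c [MOD 8]) :
    theta₄ ^ (2 * k) * regSeries ^ i ∈ monomialSpan k c d :=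
  Submodule.subset_span ⟨i, ⟨hd, hc⟩, rfl⟩

lemma ofNat_mul_mem_monomialSpan (n : ℕ) [n.AtLeastTwo] {f : ℤ⟦X⟧} (hf : f ∈ monomialSpan k c d) :
    ofNat(n) * f ∈ monomialSpan k c d := by
  rw [← Nat.cast_ofNat, ← nsmul_eq_mul]
  exact Submodule.smul_of_tower_mem _ _ hf

/- The exponents are confined to a residue class modulo `8`, so the bound `d` need not be
attained. -/
lemma monomialSpan_le_pred (hcd : ¬ d ≡ c [MOD 8]) :
    monomialSpan k c d ≤ monomialSpan k c (d - 1) := by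
  refine Submodule.span_mono (Set.image_mono fun i hi => ⟨?_, hi.2⟩)
  have hne : i ≠ d := fun h => hcd (h ▸ hi.2)
  exact Nat.le_sub_one_of_lt (hi.1.lt_of_ne hne)

lemma mul_mem_monomialSpan (l m : ℕ) {c' d' : ℕ} (hc : c + m ≡ c' [MOD 8]) (hd : d + m ≤ d')
    {f : ℤ⟦X⟧} (hf : f ∈ monomialSpan k c d) :
    regSeries ^ m * theta₄ ^ (2 * l) * f ∈ monomialSpan (k + l) c' d' := by
  suffices h : monomialSpan k c d ≤ (monomialSpan (k + l) c' d').comap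
      (LinearMap.mulLeft ℤ (regSeries ^ m * theta₄ ^ (2 * l))) from h hf
  refine Submodule.span_le.2 ?_
  rintro _ ⟨i, ⟨hi, hic⟩, rfl⟩
  have hmem : theta₄ ^ (2 * (k + l)) * regSeries ^ (i + m) ∈ monomialSpan (k + l) c' d' :=
    monomial_mem_monomialSpan ((Nat.add_le_add_right hi m).trans hd) ((hic.add_right m).trans hc)
  rw [SetLike.mem_coe, Submodule.mem_comap, LinearMap.mulLeft_apply]
  convert hmem using 1
  ring

lemma mem_monomialSpan_of_regSeries_mul_mem {f : ℤ⟦X⟧} (hf : regSeries * f ∈ monomialSpan k 1 d) :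
    f ∈ monomialSpan k 0 d := by
  suffices h : monomialSpan k 1 d ≤ (monomialSpan k 0 d).map (LinearMap.mulLeft ℤ regSeries) by
    obtain ⟨g, hg, hgf⟩ := h hf
    rwa [← mul_left_cancel₀ regSeries_ne_zero hgf]
  refine Submodule.span_le.2 ?_
  rintro _ ⟨i, ⟨hi, hic⟩, rfl⟩
  obtain ⟨j, rfl⟩ : ∃ j, i = j + 1 := Nat.exists_eq_succ_of_ne_zero (by rintro rfl; cases hic)
  refine ⟨_, monomial_mem_monomialSpan (Nat.le_of_succ_le hi) (hic.add_right_cancel' 1), ?_⟩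
  rw [LinearMap.mulLeft_apply]
  ring

lemma threeHecke_one_mem_monomialSpan {a : ℕ} (ha : a ≤ 4) :
    threeHecke 1 a ∈ monomialSpan 1 (3 * a) 4 := by
  interval_cases a
  · rw [threeHecke_one_zero]
    exact zero_mem _
  · rw [threeHecke_one_one, mul_comm (regSeries ^ 3)]
    exact neg_mem (ofNat_mul_mem_monomialSpan _ (monomial_mem_monomialSpan (k := 1) (by simp) rfl))
  · rw [threeHecke_one_two]
    exact zero_mem _
  · rw [threeHecke_one_three, mul_comm regSeries, ← pow_one regSeries]
    exact ofNat_mul_mem_monomialSpan _ (monomial_mem_monomialSpan (k := 1) (by simp) rfl)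
  · rw [threeHecke_one_four]
    exact zero_mem _

section Step

variable (hk : ∀ a ≤ 4 * k, threeHecke k a ∈ monomialSpan k (3 * a) (4 * k)) {a : ℕ}
include hk

lemma threeHecke_mul_mem {m c : ℕ} (hm : m ≤ 4) (hc : 3 * a + m ≡ c [MOD 8]) (ha : a ≤ 4 * k) :
    regSeries ^ m * theta₄ ^ 2 * threeHecke k a ∈ monomialSpan (k + 1) c (4 * (k + 1)) :=
  mul_mem_monomialSpan 1 m hc (by lia) (hk a ha)

lemma threeHecke_succ_succ_mem (ha : a + 1 ≤ 4 * k) :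
    threeHecke (k + 1) (a + 1) ∈ monomialSpan (k + 1) (3 * (a + 1)) (4 * (k + 1)) := by
  rw [threeHecke_succ_succ]
  refine sub_mem ?_ (ofNat_mul_mem_monomialSpan 4 ?_)
  · simpa using threeHecke_mul_mem hk (m := 0) (by simp) rfl ha
  · exact threeHecke_mul_mem hk (by simp) rfl (Nat.le_of_succ_le ha)

lemma threeHecke_succ_add_four_mem (ha : a + 1 ≤ 4 * k) :
    threeHecke (k + 1) (a + 4) ∈ monomialSpan (k + 1) (3 * (a + 4)) (4 * (k + 1)) := by
  rw [threeHecke_succ_add_four]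
  refine sub_mem ?_ (threeHecke_mul_mem hk le_rfl ?_ (Nat.le_of_succ_le ha))
  · have hc : 3 * (a + 1) + 1 ≡ 3 * (a + 4) [MOD 8] := by simp only [Nat.ModEq]; lia
    simpa using threeHecke_mul_mem hk (by simp) hc ha
  · simp only [Nat.ModEq]
    lia

lemma threeHecke_succ_zero_mem (hk₀ : 0 < k) :
    threeHecke (k + 1) 0 ∈ monomialSpan (k + 1) (3 * 0) (4 * (k + 1)) := by
  refine mem_monomialSpan_of_regSeries_mul_mem ?_
  rw [regSeries_mul_threeHecke_succ_zero]
  refine sub_mem (ofNat_mul_mem_monomialSpan 4 ?_) (ofNat_mul_mem_monomialSpan 3 ?_)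
  · exact threeHecke_succ_succ_mem hk (a := 2) (by lia)
  · simpa using threeHecke_mul_mem hk (a := 0) (m := 1) (by simp) rfl (by simp)

lemma threeHecke_succ_four_mul_mem (hk₀ : 0 < k) : threeHecke (k + 1) (4 * (k + 1)) ∈
    monomialSpan (k + 1) (3 * (4 * (k + 1))) (4 * (k + 1)) := by
  have hprev : threeHecke (k + 1) (4 * k + 1) ∈
      monomialSpan (k + 1) (3 * (4 * k + 1)) (4 * (k + 1) - 1) := by
    refine monomialSpan_le_pred (by simp only [Nat.ModEq]; lia) ?_
    obtain ⟨k, rfl⟩ := Nat.exists_eq_succ_of_ne_zero hk₀.ne'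
    exact threeHecke_succ_add_four_mem hk (a := 4 * k + 1) (by lia)
  rw [show 4 * (k + 1) = 4 * k + 4 from mul_add_one 4 k, threeHecke_succ_add_four_eq_add]
  refine add_mem ?_ (ofNat_mul_mem_monomialSpan 3 (threeHecke_mul_mem hk le_rfl ?_ le_rfl))
  · have hc : 3 * (4 * k + 1) + 1 ≡ 3 * (4 * k + 4) [MOD 8] := by simp only [Nat.ModEq]; lia
    simpa using mul_mem_monomialSpan 0 1 hc (by lia) hprev
  · simp only [Nat.ModEq]
    lia

end Step

theorem threeHecke_mem_monomialSpan (hk : 0 < k) {a : ℕ} (ha : a ≤ 4 * k) :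
    threeHecke k a ∈ monomialSpan k (3 * a) (4 * k) := by
  induction k, hk using Nat.le_induction generalizing a with
  | base => exact threeHecke_one_mem_monomialSpan ha
  | succ k hk ih =>
    replace ih := fun a ha => @ih a ha
    obtain rfl | ha₀ := a.eq_zero_or_pos
    · exact threeHecke_succ_zero_mem ih hk
    obtain ha | rfl := ha.lt_or_eq
    · obtain ha' | ha' := le_or_gt a (4 * k)
      · obtain ⟨b, rfl⟩ := Nat.exists_eq_succ_of_ne_zero ha₀.ne'
        exact threeHecke_succ_succ_mem ih ha'
      · obtain ⟨b, rfl⟩ : ∃ b, a = b + 4 := ⟨a - 4, by lia⟩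
        exact threeHecke_succ_add_four_mem ih (by lia)
    · exact threeHecke_succ_four_mul_mem ih hk

/-! ### Gauss's mean in odd characteristic and the Hasse invariant -/

section LegendreForm

variable {R : Type*} [CommRing R]

/-- The homogeneous form of the Legendre polynomial of degree `n`. In characteristic `2 * n + 1`
its vanishing cuts out the supersingular elliptic curves. -/
def legendreForm (n : ℕ) (a b : R) : R :=
  ∑ i ∈ range (n + 1), (n.choose i : R) ^ 2 * a ^ (n - i) * b ^ i

variable (n : ℕ)

lemma map_legendreForm {S F : Type*} [CommRing S] [FunLike F R S] [RingHomClass F R S] (f : F)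
    (a b : R) : f (legendreForm n a b) = legendreForm n (f a) (f b) := by
  simp only [legendreForm, map_sum, map_mul, map_pow, map_natCast]

lemma legendreForm_mul_mul (c a b : R) :
    legendreForm n (c * a) (c * b) = c ^ n * legendreForm n a b := by
  rw [legendreForm, legendreForm, mul_sum]
  refine sum_congr rfl fun i hi => ?_
  rw [mul_pow, mul_pow, ← Nat.sub_add_cancel (mem_range_succ_iff.1 hi), pow_add c,
    Nat.sub_add_cancel (mem_range_succ_iff.1 hi)]
  ring

lemma legendreForm_one_one : legendreForm n (1 : R) 1 = n.centralBinom := by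
  simp only [legendreForm, one_pow, mul_one, Nat.centralBinom, ← Nat.sum_range_choose_sq]
  push_cast
  rfl

lemma coeff_X_add_C_mul_pow (a b : R) :
    (((.X + .C a) * (.X + .C b)) ^ n : Polynomial R).coeff n = legendreForm n a b := by
  rw [mul_pow, Polynomial.coeff_mul, Finset.Nat.sum_antidiagonal_eq_sum_range_succ_mk]
  refine sum_congr rfl fun i hi => ?_
  have hi := mem_range_succ_iff.1 hi
  rw [Polynomial.coeff_X_add_C_pow, Polynomial.coeff_X_add_C_pow, Nat.choose_symm hi,
    Nat.sub_sub_self hi]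
  ring

lemma coeff_X_sub_C_sq_add_C_mul_X_pow (c d : R) :
    (((.X - .C c) ^ 2 + .C d * .X) ^ n : Polynomial R).coeff n =
      ∑ i ∈ range (n + 1), n.choose i * (i.centralBinom * (-1) ^ i) * d ^ (n - i) * c ^ i := by
  rw [add_pow, Polynomial.finsetSum_coeff]
  refine sum_congr rfl fun i hi => ?_
  have hi := mem_range_succ_iff.1 hi
  have hterm : (((.X - .C c) ^ 2) ^ i * (.C d * .X) ^ (n - i) * n.choose i : Polynomial R) =
      .X ^ (n - i) * (.C (d ^ (n - i) * n.choose i) * (.X + .C (-c)) ^ (2 * i)) := by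
    simp only [map_mul, map_pow, map_natCast, map_neg, ← sub_eq_add_neg, pow_mul]
    ring
  have hcoeff := Polynomial.coeff_X_pow_mul (.C (d ^ (n - i) * n.choose i) *
    (.X + .C (-c)) ^ (2 * i)) (n - i) i
  rw [Nat.add_sub_cancel' hi] at hcoeff
  rw [hterm, hcoeff, Polynomial.coeff_C_mul, Polynomial.coeff_X_add_C_pow, two_mul,
    Nat.add_sub_cancel, ← two_mul, ← Nat.centralBinom, neg_pow c]
  ring

lemma legendreForm_sq_sq (a b : R) : legendreForm n (a ^ 2) (b ^ 2) =
    ∑ i ∈ range (n + 1),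
      n.choose i * (i.centralBinom * (-1) ^ i) * ((a + b) ^ 2) ^ (n - i) * (a * b) ^ i := by
  rw [← coeff_X_add_C_mul_pow, ← coeff_X_sub_C_sq_add_C_mul_X_pow]
  congr 2
  simp only [map_mul, map_pow, map_add]
  ring

variable {n} {p : ℕ} [Fact p.Prime]

lemma centralBinom_mul_neg_one_pow (hn : 2 * n + 1 = p) {i : ℕ} (hi : i ≤ n) :
    (i.centralBinom * (-1) ^ i : ZMod p) = 4 ^ i * n.choose i := by
  induction i with
  | zero => simp
  | succ i ih =>
    have hne : (i + 1 : ZMod p) ≠ 0 := by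
      rw [← Nat.cast_add_one, Ne, ZMod.natCast_eq_zero_iff]
      exact Nat.not_dvd_of_pos_of_lt i.succ_pos (by lia)
    have hbinom := congrArg (Nat.cast (R := ZMod p)) (Nat.succ_mul_centralBinom_succ i)
    have hchoose := congrArg (Nat.cast (R := ZMod p)) (Nat.choose_succ_right_eq n i)
    have hp : (2 * n + 1 : ZMod p) = 0 := by
      exact_mod_cast (congrArg (Nat.cast (R := ZMod p)) hn).trans (CharP.cast_eq_zero _ p)
    push_cast [Nat.cast_sub (show i ≤ n by lia)] at hbinom hchoose
    apply mul_left_cancel₀ hne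
    linear_combination -(-1) ^ i * hbinom - 2 * (2 * i + 1) * ih (by lia) - 4 * 4 ^ i * hchoose -
      2 * 4 ^ i * n.choose i * hp

lemma four_pow_eq_one (hn : 2 * n + 1 = p) : (4 : ZMod p) ^ n = 1 := by
  have h2 : (2 : ZMod p) ≠ 0 := by
    rw [← Nat.cast_two, Ne, ZMod.natCast_eq_zero_iff]
    intro h
    have := (Nat.prime_dvd_prime_iff_eq Fact.out Nat.prime_two).1 h
    lia
  rw [← ZMod.pow_card_sub_one_eq_one h2, show p - 1 = 2 * n by lia, pow_mul]
  norm_num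

lemma legendreForm_sq_sq_eq [Algebra (ZMod p) R] (hn : 2 * n + 1 = p) (a b : R) :
    legendreForm n (a ^ 2) (b ^ 2) = legendreForm n ((a + b) ^ 2) (4 * (a * b)) := by
  rw [legendreForm_sq_sq]
  refine sum_congr rfl fun i hi => ?_
  have h := congrArg (algebraMap (ZMod p) R)
    (centralBinom_mul_neg_one_pow hn (mem_range_succ_iff.1 hi))
  simp only [map_mul, map_pow, map_natCast, map_neg, map_one, map_ofNat] at h
  rw [h]
  ring

-- This is Gauss's transformation: `x` and `y` are the squares of the arithmetic and geometric means
-- of `a` and `b`.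
lemma legendreForm_sq_sq_eq_of_mean [Algebra (ZMod p) R] (hn : 2 * n + 1 = p) {a b x y : R}
    (hx : (a + b) ^ 2 = 4 * x) (hy : a * b = y) :
    legendreForm n (a ^ 2) (b ^ 2) = legendreForm n x y := by
  have h4 := congrArg (algebraMap (ZMod p) R) (four_pow_eq_one hn)
  simp only [map_pow, map_ofNat, map_one] at h4
  rw [legendreForm_sq_sq_eq hn, hx, hy, legendreForm_mul_mul, h4, one_mul]

lemma centralBinom_ne_zero_of_lt (hn : 2 * n < p) : (n.centralBinom : ZMod p) ≠ 0 := by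
  rw [Ne, ZMod.natCast_eq_zero_iff]
  intro h
  have hfact : p ∣ (2 * n).factorial := by
    rw [← Nat.choose_mul_factorial_mul_factorial (show n ≤ 2 * n by lia), mul_assoc]
    exact h.mul_right _
  exact hn.not_ge ((Nat.Prime.dvd_factorial Fact.out).1 hfact)

end LegendreForm

section Reduction

variable (p : ℕ)

/-- Reduction of integral power series modulo `p`. -/
noncomputable abbrev red : ℤ⟦X⟧ →+* (ZMod p)⟦X⟧ := PowerSeries.map (Int.castRingHom (ZMod p))

lemma red_V (k : ℕ) [NeZero k] (f : ℤ⟦X⟧) : red p (V k f) = V k (red p f) :=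
  map_expand k (NeZero.ne k) _ f

lemma red_U (k : ℕ) (f : ℤ⟦X⟧) : red p (U k f) = U k (red p f) := by
  ext n
  simp only [red, coeff_U, coeff_map]

lemma constantCoeff_red (f : ℤ⟦X⟧) : constantCoeff (red p f) = constantCoeff f := by
  simp only [red, ← coeff_zero_eq_constantCoeff_apply, coeff_map, eq_intCast]

lemma red_qDeriv (f : ℤ⟦X⟧) : red p (qDeriv f) = qDeriv (red p f) := by
  ext n
  simp only [red, coeff_qDeriv, coeff_map, map_mul, map_natCast]

variable [Fact p.Prime]

lemma pow_prime_eq_V [NeZero p] (f : (ZMod p)⟦X⟧) : f ^ p = V p f := by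
  rw [← MvPowerSeries.map_frobenius_expand p (NeZero.ne p), ZMod.frobenius_zmod]
  exact (DFunLike.congr_fun MvPowerSeries.map_id _).symm

end Reduction

lemma eq_C_of_V_eq_self {R : Type*} [CommRing R] {k : ℕ} [NeZero k] (hk : 1 < k) {f : R⟦X⟧}
    (hf : V k f = f) : f = C (constantCoeff f) := by
  ext n
  induction n using Nat.strong_induction_on with
  | _ n ih =>
    rcases Nat.eq_zero_or_pos n with rfl | hpos
    · simp
    rw [coeff_C, if_neg hpos.ne', ← hf, coeff_expand]
    split_ifs with hdvd
    · rw [ih _ (Nat.div_lt_self hpos hk), coeff_C,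
        if_neg (Nat.div_pos (Nat.le_of_dvd hpos hdvd) (by lia)).ne']
    · rfl

lemma constantCoeff_theta₃ : constantCoeff theta₃ = 1 :=
  sub_eq_zero.1 (by simpa using X_pow_dvd_iff.1 X_pow_eight_dvd_theta₃_sub_one 0 (by norm_num))

lemma constantCoeff_theta₄ : constantCoeff theta₄ = 1 :=
  sub_eq_zero.1 (by simpa using X_pow_dvd_iff.1 X_pow_eight_dvd_theta₄_sub_one 0 (by norm_num))

section Hasse

variable {p n : ℕ} [Fact p.Prime]

-- `V_2` replaces the squares of the theta values by their arithmetic and geometric means.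
lemma legendreForm_theta_eq_C (hn : 2 * n + 1 = p) :
    legendreForm n (red p theta₃ ^ 4) (red p theta₄ ^ 4) = C (n.centralBinom : ZMod p) := by
  have hV : V 2 (legendreForm n (red p theta₃ ^ 4) (red p theta₄ ^ 4)) =
      legendreForm n (red p theta₃ ^ 4) (red p theta₄ ^ 4) := by
    have hsum := congrArg (red p) theta₃_sq_add_theta₄_sq
    have hmul := congrArg (red p) theta₄_mul_theta₃
    simp only [map_add, map_mul, map_pow, map_ofNat, red_V] at hsum hmul
    rw [map_legendreForm, map_pow, map_pow,
      ← legendreForm_sq_sq_eq_of_mean hn (a := red p theta₃ ^ 2) (b := red p theta₄ ^ 2)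
        (by rw [hsum]; ring) (by rw [← mul_pow, mul_comm, hmul]; ring)]
    simp only [← pow_mul, Nat.reduceMul]
  rw [eq_C_of_V_eq_self one_lt_two hV, map_legendreForm]
  simp only [map_pow, constantCoeff_red, constantCoeff_theta₃, constantCoeff_theta₄,
    Int.cast_one, one_pow, legendreForm_one_one]

lemma legendreForm_theta_eq : legendreForm n (red p theta₃ ^ 4) (red p theta₄ ^ 4) =
    red p theta₄ ^ (4 * n) *
      Polynomial.aeval (red p regSeries) (legendreForm n (1 + 16 * .X ^ 8 : Polynomial (ZMod p)) 1)
      := by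
  have h := congrArg (red p) theta₃_pow_four_eq
  simp only [map_mul, map_pow, map_add, map_one, map_ofNat] at h
  rw [map_legendreForm, h, pow_mul, ← legendreForm_mul_mul]
  simp [map_ofNat]

lemma natDegree_legendreForm_le :
    (legendreForm n (1 + 16 * .X ^ 8 : Polynomial (ZMod p)) 1).natDegree ≤ 8 * n := by
  refine Polynomial.natDegree_sum_le_of_forall_le _ _ fun i _ => ?_
  have h : (1 + 16 * .X ^ 8 : Polynomial (ZMod p)).natDegree ≤ 8 := by compute_degree
  rw [one_pow, mul_one, ← Nat.cast_pow, ← Polynomial.C_eq_natCast]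
  calc _ ≤ (n - i) * 8 :=
        (Polynomial.natDegree_C_mul_le _ _).trans (Polynomial.natDegree_pow_le_of_le _ h)
    _ ≤ 8 * n := by lia

/-- The Hasse invariant, a modular form of weight `p - 1`, has `q`-expansion `1` modulo `p`. -/
theorem exists_theta₄_pow_mul_aeval_eq_one (hp : p ≠ 2) :
    ∃ A : Polynomial (ZMod p), A.natDegree ≤ 4 * (p - 1) ∧
      red p theta₄ ^ (2 * (p - 1)) * Polynomial.aeval (red p regSeries) A = 1 := by
  obtain ⟨n, hn⟩ := (Fact.out : p.Prime).odd_of_ne_two hp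
  refine ⟨.C (n.centralBinom : ZMod p)⁻¹ * legendreForm n (1 + 16 * .X ^ 8) 1, ?_, ?_⟩
  · calc _ ≤ 8 * n := (Polynomial.natDegree_C_mul_le _ _).trans natDegree_legendreForm_le
      _ ≤ _ := by lia
  · have h := legendreForm_theta_eq.symm.trans (legendreForm_theta_eq_C hn.symm)
    rw [show 2 * (p - 1) = 4 * n by lia, map_mul, Polynomial.aeval_C, mul_left_comm, h,
      PowerSeries.algebraMap_apply, ← map_mul]
    simp [centralBinom_ne_zero_of_lt (p := p) (n := n) (by lia)]

end Hasse

/-! ### Forms modulo `p` and the operator `U_p` -/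

lemma constantCoeff_aeval {R : Type*} [CommRing R] (f : R⟦X⟧) (g : Polynomial R) :
    constantCoeff (Polynomial.aeval f g) = g.eval (constantCoeff f) := by
  rw [Polynomial.aeval_def, Polynomial.hom_eval₂, Polynomial.eval]
  congr 1

lemma aeval_ne_zero {R : Type*} [CommRing R] [IsDomain R] {f : R⟦X⟧} (hf : f ≠ 0)
    (h0 : constantCoeff f = 0) {g : Polynomial R} (hg : g ≠ 0) : Polynomial.aeval f g ≠ 0 := by
  obtain ⟨u, hu, hndvd⟩ := Polynomial.exists_eq_pow_rootMultiplicity_mul_and_not_dvd g hg 0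
  have hunit : Polynomial.aeval f u ≠ 0 := fun h => by
    rw [Polynomial.dvd_iff_isRoot, Polynomial.IsRoot, ← h0, ← constantCoeff_aeval, h, h0] at hndvd
    exact hndvd (map_zero _)
  rw [hu, map_mul, map_pow, map_zero, sub_zero, Polynomial.aeval_X]
  exact mul_ne_zero (pow_ne_zero _ hf) hunit

lemma coeff_iterate_qDeriv {R : Type*} [CommRing R] (f : R⟦X⟧) (j n : ℕ) :
    coeff n (qDeriv^[j] f) = n ^ j * coeff n f := by
  induction j with
  | zero => simp
  | succ j ih => rw [Function.iterate_succ_apply', coeff_qDeriv, ih, pow_succ', mul_assoc]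

/-- The space of the series `θ₄ ^ k g(F)` modulo `p`, where `g` runs over the polynomials of degree
at most `d`. For `d = 2 * k` this is the reduction of a space of modular forms of weight `k / 2`. -/
noncomputable def thetaForms (p k d : ℕ) : Submodule (ZMod p) (ZMod p)⟦X⟧ :=
  (Polynomial.degreeLE (ZMod p) d).map
    (LinearMap.mulLeft (ZMod p) (red p theta₄ ^ k) ∘ₗ
      (Polynomial.aeval (red p regSeries)).toLinearMap)

lemma mem_thetaForms {p k d : ℕ} {f : (ZMod p)⟦X⟧} : f ∈ thetaForms p k d ↔
    ∃ g : Polynomial (ZMod p), g.natDegree ≤ d ∧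
      red p theta₄ ^ k * Polynomial.aeval (red p regSeries) g = f := by
  simp only [thetaForms, Submodule.mem_map, Polynomial.mem_degreeLE,
    Polynomial.natDegree_le_iff_degree_le, LinearMap.comp_apply, LinearMap.mulLeft_apply,
    AlgHom.toLinearMap_apply]

/-- The polynomial `Q` such that `q dF/dq = θ₄ ^ 4 Q(F)` modulo `p`. -/
noncomputable def regDerivPoly (p : ℕ) : Polynomial (ZMod p) := .X * (1 + 16 * .X ^ 8)

lemma natDegree_regDerivPoly_le {p : ℕ} : (regDerivPoly p).natDegree ≤ 9 := by
  rw [regDerivPoly]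
  compute_degree

section ThetaForms

variable {p k d : ℕ} [Fact p.Prime] {f : (ZMod p)⟦X⟧}

lemma natCast_self_eq_zero : (p : (ZMod p)⟦X⟧) = 0 := by
  rw [← map_natCast (C (R := ZMod p)), CharP.cast_eq_zero, map_zero]

lemma qDeriv_pow_mul (f g : (ZMod p)⟦X⟧) (k : ℕ) :
    qDeriv (f ^ (p * k) * g) = f ^ (p * k) * qDeriv g := by
  rw [qDeriv_mul, qDeriv_pow, Nat.cast_mul, natCast_self_eq_zero]
  ring

-- Fermat's little theorem: `q d/dq` multiplies the coefficient of `q ^ n` by `n`.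
lemma V_U_eq_sub [NeZero p] (f : (ZMod p)⟦X⟧) : V p (U p f) = f - qDeriv^[p - 1] f := by
  ext n
  rw [map_sub, coeff_iterate_qDeriv, coeff_expand]
  split_ifs with hdvd
  · obtain ⟨m, rfl⟩ := hdvd
    have : p - 1 ≠ 0 := (Nat.sub_pos_of_lt (Fact.out : p.Prime).one_lt).ne'
    rw [coeff_U, Nat.mul_div_cancel_left _ (NeZero.pos p), Nat.cast_mul, CharP.cast_eq_zero,
      zero_mul, zero_pow this, zero_mul, sub_zero]
  · have : (n : ZMod p) ≠ 0 := by rwa [Ne, ZMod.natCast_eq_zero_iff]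
    rw [ZMod.pow_card_sub_one_eq_one this, one_mul, sub_self]

lemma constantCoeff_red_regSeries : constantCoeff (red p regSeries) = 0 := by
  simp [constantCoeff_red, regSeries]

lemma red_regSeries_ne_zero : red p regSeries ≠ 0 := by
  have h := modXPow_two_regSeries
  rw [← sub_eq_zero, ← map_sub, modXPow_eq_zero_iff, X_pow_dvd_iff] at h
  intro hzero
  have h1 := congrArg (coeff 1) hzero
  rw [coeff_map, sub_eq_zero.1 ((map_sub _ _ _).symm.trans (h 1 one_lt_two)), coeff_one_X] at h1
  simp at h1

lemma red_theta₄_ne_zero : red p theta₄ ≠ 0 := fun h => by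
  have h0 := constantCoeff_red p theta₄
  rw [h, constantCoeff_theta₄] at h0
  simp at h0

lemma regDerivPoly_ne_zero : regDerivPoly p ≠ 0 :=
  mul_ne_zero Polynomial.X_ne_zero fun h => by simpa using congrArg (Polynomial.eval 0) h

lemma qDeriv_red_regSeries : qDeriv (red p regSeries) =
    red p theta₄ ^ 4 * Polynomial.aeval (red p regSeries) (regDerivPoly p) := by
  rw [← red_qDeriv, qDeriv_regSeries, regDerivPoly]
  simp only [map_mul, map_pow, map_add, map_one, map_ofNat, Polynomial.aeval_X]
  ring

lemma qDeriv_thetaForm (k : ℕ) (g : Polynomial (ZMod p)) :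
    qDeriv (red p theta₄ ^ (p * k) * Polynomial.aeval (red p regSeries) g) =
      red p theta₄ ^ (p * k + 4) *
        Polynomial.aeval (red p regSeries) (g.derivative * regDerivPoly p) := by
  rw [qDeriv_pow_mul, Derivation.map_aeval, qDeriv_red_regSeries, smul_eq_mul, map_mul,
    pow_add]
  ring

lemma mem_thetaForms_of_hasse (hp : p ≠ 2) (m : ℕ) (hf : f ∈ thetaForms p k d) :
    f ∈ thetaForms p (k + 2 * (p - 1) * m) (d + 4 * (p - 1) * m) := by
  obtain ⟨A, hA, hA_one⟩ := exists_theta₄_pow_mul_aeval_eq_one hp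
  obtain ⟨g, hg, rfl⟩ := mem_thetaForms.1 hf
  refine mem_thetaForms.2 ⟨g * A ^ m, Polynomial.natDegree_mul_le_of_le hg ?_, ?_⟩
  · rw [mul_comm]
    exact Polynomial.natDegree_pow_le_of_le m hA
  · rw [map_mul, map_pow, pow_add, pow_mul, mul_mul_mul_comm, ← mul_pow, hA_one, one_pow, mul_one]

lemma qDeriv_mem_thetaForms (hp : p ≠ 2) (hf : f ∈ thetaForms p (p * k) d) :
    qDeriv f ∈ thetaForms p (p * (k + 4)) (d + 8 * p) := by
  obtain ⟨g, hg, rfl⟩ := mem_thetaForms.1 hf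
  have hdeg : (g.derivative * regDerivPoly p).natDegree ≤ d + 8 := by
    rcases Nat.eq_zero_or_pos g.natDegree with h0 | hpos
    · rw [Polynomial.derivative_of_natDegree_zero h0, zero_mul, Polynomial.natDegree_zero]
      exact Nat.zero_le _
    · have := Polynomial.natDegree_derivative_lt hpos.ne'
      calc _ ≤ (d - 1) + 9 :=
            Polynomial.natDegree_mul_le_of_le (by lia) natDegree_regDerivPoly_le
        _ ≤ d + 8 := by lia
  have hp1 := (Fact.out : p.Prime).one_le
  have h := mem_thetaForms_of_hasse hp 2 (mem_thetaForms.2 ⟨_, hdeg, (qDeriv_thetaForm k g).symm⟩)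
  rwa [show p * k + 4 + 2 * (p - 1) * 2 = p * (k + 4) by lia,
    show d + 8 + 4 * (p - 1) * 2 = d + 8 * p by lia] at h

lemma iterate_qDeriv_mem_thetaForms (hp : p ≠ 2) (hf : f ∈ thetaForms p 0 d) (j : ℕ) :
    qDeriv^[j] f ∈ thetaForms p (p * (4 * j)) (d + 8 * p * j) := by
  induction j with
  | zero => simpa using hf
  | succ j ih =>
    rw [Function.iterate_succ_apply', mul_add 4, mul_add (8 * p), mul_one, mul_one, ← add_assoc]
    exact qDeriv_mem_thetaForms hp ih

lemma mem_thetaForms_of_V_mem [NeZero p] (hf : V p f ∈ thetaForms p (p * k) d) :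
    f ∈ thetaForms p k (d / p) := by
  obtain ⟨g, hg, hgf⟩ := mem_thetaForms.1 hf
  have hder : g.derivative = 0 := by
    have hq := congrArg qDeriv hgf
    rw [qDeriv_thetaForm, qDeriv_V, natCast_self_eq_zero, zero_mul] at hq
    have hzero := (mul_eq_zero.1 hq).resolve_left (pow_ne_zero _ red_theta₄_ne_zero)
    have hprod : g.derivative * regDerivPoly p = 0 := by
      by_contra hne
      exact aeval_ne_zero red_regSeries_ne_zero constantCoeff_red_regSeries hne hzero
    exact (mul_eq_zero.1 hprod).resolve_right regDerivPoly_ne_zero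
  have hexpand := Polynomial.expand_contract p hder (NeZero.ne p)
  refine mem_thetaForms.2 ⟨.contract p g, ?_, V_injective (k := p) ?_⟩
  · rw [Nat.le_div_iff_mul_le (NeZero.pos p), ← Polynomial.natDegree_expand, hexpand]
    exact hg
  · rw [← hgf, ← pow_prime_eq_V, mul_pow, ← pow_mul, mul_comm k,
      ← map_pow (Polynomial.aeval _), ← ZMod.expand_card, hexpand]

theorem U_red_regSeries_mem_thetaForms (hp : p ≠ 2) :
    U p (red p regSeries) ∈ thetaForms p (4 * (p - 1)) (8 * (p - 1)) := by
  have hp2 := (Fact.out : p.Prime).two_le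
  have : NeZero p := ⟨by lia⟩
  have hF : red p regSeries ∈ thetaForms p 0 1 :=
    mem_thetaForms.2 ⟨.X, Polynomial.natDegree_X_le, by simp⟩
  have hV : V p (U p (red p regSeries)) ∈
      thetaForms p (p * (4 * (p - 1))) (1 + 8 * p * (p - 1)) := by
    rw [V_U_eq_sub]
    refine sub_mem ?_ (iterate_qDeriv_mem_thetaForms hp hF _)
    have h := mem_thetaForms_of_hasse hp (2 * p) hF
    rwa [show 0 + 2 * (p - 1) * (2 * p) = p * (4 * (p - 1)) by ring,
      show 1 + 4 * (p - 1) * (2 * p) = 1 + 8 * p * (p - 1) by ring] at h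
  have h := mem_thetaForms_of_V_mem hV
  rwa [mul_assoc, mul_left_comm, Nat.add_mul_div_left _ _ (NeZero.pos p), Nat.div_eq_of_lt hp2,
    zero_add] at h

end ThetaForms

/-! ### Periodicity under a Hecke operator -/

section Periodicity

variable {K : Type*} [Field K] (ℓ : ℕ) [NeZero ℓ] (c : K)

/-- The operator `U_ℓ + c V_ℓ`, which is the Hecke operator `T_ℓ` for a suitable `c`. -/
noncomputable def hecke : K⟦X⟧ →ₗ[K] K⟦X⟧ := U ℓ + c • (V ℓ : K⟦X⟧ →ₐ[K] K⟦X⟧).toLinearMap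

lemma hecke_apply (f : K⟦X⟧) : hecke ℓ c f = U ℓ f + c • V ℓ f := rfl

/-- The step `(T_{ℓ ^ n} f, T_{ℓ ^ (n - 1)} f) ↦ (T_{ℓ ^ (n + 1)} f, T_{ℓ ^ n} f)` in the recursion
`T_{ℓ ^ (n + 1)} = T_ℓ T_{ℓ ^ n} - c T_{ℓ ^ (n - 1)}` of the Hecke operators. -/
noncomputable def heckeStep (x : K⟦X⟧ × K⟦X⟧) : K⟦X⟧ × K⟦X⟧ := (hecke ℓ c x.1 - c • x.2, x.1)

variable {c}

lemma heckeStep_injective (hc : c ≠ 0) : Function.Injective (heckeStep ℓ c) := by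
  rintro ⟨f₁, g₁⟩ ⟨f₂, g₂⟩ h
  simp only [heckeStep, Prod.mk.injEq] at h
  obtain ⟨hfst, rfl⟩ := h
  rw [smul_right_injective _ hc (sub_right_injective hfst)]

lemma iterate_heckeStep_fst (f : K⟦X⟧) (n : ℕ) : ((heckeStep ℓ c)^[n] (f, 0)).1 =
    (U ℓ)^[n] f + c • V ℓ ((heckeStep ℓ c)^[n] (f, 0)).2 := by
  induction n with
  | zero => simp
  | succ n ih =>
    rw [Function.iterate_succ_apply', Function.iterate_succ_apply' (U ℓ)]
    set x := (heckeStep ℓ c)^[n] (f, 0)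
    simp only [heckeStep]
    rw [hecke_apply]
    nth_rewrite 1 [ih]
    rw [map_add, map_smul, U_V]
    abel

theorem exists_period_of_hecke_mem (hc : c ≠ 0) {W : Submodule K K⟦X⟧} (hW : (W : Set K⟦X⟧).Finite)
    (hT : ∀ f ∈ W, hecke ℓ c f ∈ W) {f : K⟦X⟧} (hf : f ∈ W) :
    ∃ π, 0 < π ∧ ∀ N, π ∣ N + 1 → ∀ m, ¬ ℓ ∣ m → coeff (ℓ ^ N * m) f = 0 := by
  have hfinite : Finite ↑((W : Set K⟦X⟧) ×ˢ (W : Set K⟦X⟧)) := (hW.prod hW).to_subtype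
  have hmaps : Set.MapsTo (heckeStep ℓ c) ((W : Set K⟦X⟧) ×ˢ (W : Set K⟦X⟧)) (W ×ˢ W) :=
    fun x hx => ⟨sub_mem (hT _ hx.1) (W.smul_mem _ hx.2), hx.1⟩
  have hinj : Function.Injective hmaps.restrict :=
    hmaps.restrict_inj.2 (heckeStep_injective ℓ hc).injOn
  obtain ⟨π, hπ, hper⟩ := hinj.mem_periodicPts ⟨(f, 0), hf, W.zero_mem⟩
  refine ⟨π, hπ, fun N hN m hm => ?_⟩
  have hreturn := congrArg Subtype.val (hper.trans_dvd hN).eq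
  rw [Set.MapsTo.iterate_restrict, Set.MapsTo.val_restrict_apply,
    Function.iterate_succ_apply'] at hreturn
  have hfst : ((heckeStep ℓ c)^[N] (f, 0)).1 = 0 := congrArg Prod.snd hreturn
  rw [iterate_heckeStep_fst] at hfst
  have hcoeff := congrArg (coeff m) hfst
  rwa [map_add, coeff_iterate_U, map_smul, coeff_expand, if_neg hm, smul_zero, add_zero,
    map_zero] at hcoeff

end Periodicity

section LargePrimes

variable {p k d : ℕ} [Fact p.Prime]

lemma red_mem_thetaForms {c : ℕ} {f : ℤ⟦X⟧} (hf : f ∈ monomialSpan k c d) :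
    red p f ∈ thetaForms p (2 * k) d := by
  induction hf using Submodule.span_induction with
  | mem f hf =>
    obtain ⟨i, ⟨hi, -⟩, rfl⟩ := hf
    exact mem_thetaForms.2 ⟨.X ^ i, (Polynomial.natDegree_X_pow_le i).trans hi, by simp⟩
  | zero => rw [map_zero]; exact zero_mem _
  | add f g _ _ hf hg => rw [map_add]; exact add_mem hf hg
  | smul n f _ hf => rw [map_zsmul]; exact zsmul_mem hf n

lemma thetaForms_finite : (thetaForms p k d : Set (ZMod p)⟦X⟧).Finite := by
  have : Module.Finite (ZMod p) (thetaForms p k d) := by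
    rw [Module.Finite.iff_fg, thetaForms, Polynomial.degreeLE_eq_span_X_pow]
    exact (Submodule.fg_span (Finset.finite_toSet _)).map _
  have : Finite (thetaForms p k d) := Module.finite_of_finite (ZMod p)
  exact Set.toFinite _

lemma thetaForms_le_of_monomial_mem {W : Submodule (ZMod p) (ZMod p)⟦X⟧}
    (hW : ∀ i ≤ d, red p (theta₄ ^ k * regSeries ^ i) ∈ W) : thetaForms p k d ≤ W := by
  rw [thetaForms, Polynomial.degreeLE_eq_span_X_pow, Submodule.map_span_le]
  intro g hg
  obtain ⟨i, hi, rfl⟩ := mem_image.1 hg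
  simpa using hW i (mem_range_succ_iff.1 hi)

lemma three_ne_zero_of_ne (hp : p ≠ 3) : (3 : ZMod p) ≠ 0 := by
  rw [← Nat.cast_ofNat, Ne, ZMod.natCast_eq_zero_iff]
  exact fun h => hp ((Nat.prime_dvd_prime_iff_eq Fact.out Nat.prime_three).1 h)

lemma red_threeHecke (hp : p ≠ 3) (i : ℕ) : red p (threeHecke (2 * (p - 1)) i) =
    (3 : ZMod p) • hecke 3 3⁻¹ (red p (theta₄ ^ (4 * (p - 1)) * regSeries ^ i)) := by
  have h3 := three_ne_zero_of_ne hp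
  have hpow := congrArg (C (R := ZMod p)) (ZMod.pow_card_sub_one_eq_one (neg_ne_zero.2 h3))
  simp only [map_pow, map_neg, map_one, map_ofNat] at hpow
  rw [threeHecke, show 2 * (2 * (p - 1)) = 4 * (p - 1) by ring, map_add, map_mul (red p),
    map_mul (red p), red_U, red_V, map_pow (red p), map_neg, map_ofNat, mul_comm 2 (p - 1),
    pow_mul (-3), hpow, one_pow, one_mul, hecke_apply, smul_add, smul_smul, mul_inv_cancel₀ h3,
    one_smul, PowerSeries.smul_eq_C_mul, map_ofNat]

lemma hecke_mem_thetaForms (hp : p ≠ 3) {f : (ZMod p)⟦X⟧}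
    (hf : f ∈ thetaForms p (4 * (p - 1)) (8 * (p - 1))) :
    hecke 3 (3 : ZMod p)⁻¹ f ∈ thetaForms p (4 * (p - 1)) (8 * (p - 1)) := by
  refine thetaForms_le_of_monomial_mem
    (W := (thetaForms p (4 * (p - 1)) (8 * (p - 1))).comap (hecke 3 3⁻¹)) (fun i hi => ?_) hf
  have hpos := Nat.sub_pos_of_lt (Fact.out : p.Prime).one_lt
  have h := red_mem_thetaForms (p := p)
    (threeHecke_mem_monomialSpan (k := 2 * (p - 1)) (a := i) (by lia) (by lia))
  rw [red_threeHecke hp, ← mul_assoc, ← mul_assoc] at h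
  exact ((thetaForms p _ _).smul_mem_iff (three_ne_zero_of_ne hp)).1 h

theorem exists_period_of_prime_ne (hp2 : p ≠ 2) (hp3 : p ≠ 3) : ∃ π, 0 < π ∧ ∀ N, π ∣ N + 1 →
    ∀ m, ¬ 3 ∣ m → ∀ n, 8 * n + 1 = p * (3 ^ N * m) → p ∣ bReg 4 n := by
  obtain ⟨π, hπ, hper⟩ := exists_period_of_hecke_mem 3 (inv_ne_zero (three_ne_zero_of_ne hp3))
    thetaForms_finite (fun f => hecke_mem_thetaForms hp3) (U_red_regSeries_mem_thetaForms hp2)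
  refine ⟨π, hπ, fun N hN m hm n hn => ?_⟩
  have hcoeff := hper N hN m hm
  rw [coeff_U, ← hn, coeff_map, coeff_regSeries] at hcoeff
  rw [← ZMod.natCast_eq_zero_iff]
  simpa using hcoeff

end LargePrimes

/-! ### The primes three and two -/

lemma U_oddPsiNeg_mul_theta₄ : U 3 (oddPsiNeg * theta₄) =
    V 3 oddPsiNeg * V 3 theta₄ - 4 * (theta₄ ^ 2 * regSeries ^ 3) := by
  have h := threeHecke_one_one
  rw [threeHecke, show theta₄ ^ (2 * 1) * regSeries ^ 1 = oddPsiNeg * theta₄ by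
    rw [← regSeries_mul_theta₄]; ring, map_mul (V 3)] at h
  refine mul_left_cancel₀ (OfNat.ofNat_ne_zero 3) ?_
  linear_combination h

lemma U_oddPsiNeg_mul_theta₄_sq : U 3 (oddPsiNeg * theta₄ ^ 2) =
    3 * V 3 oddPsiNeg * V 3 theta₄ ^ 2 - 8 * V 3 theta₄ * (theta₄ ^ 2 * regSeries ^ 3) := by
  set g := theta₄ - C 1 * V 3 (V 3 theta₄) with hg
  set r := oddPsiNeg - C (-1) * V 3 (V 3 oddPsiNeg) with hr
  have hθ : theta₄ = V 3 (V 3 theta₄) + g := by simp [hg]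
  have hψ : oddPsiNeg = r - V 3 (V 3 oddPsiNeg) := by simp [hr]
  have hUr : U 3 r = 0 := isSupportedMod_oddPsiNeg_sub.U_eq_zero (by norm_num)
  have hUg : U 3 g = 0 := isSupportedMod_theta₄_sub.U_eq_zero (by norm_num)
  have hUrgg : U 3 (r * (g * g)) = 0 :=
    (isSupportedMod_oddPsiNeg_sub.mul
      (isSupportedMod_theta₄_sub.mul isSupportedMod_theta₄_sub)).U_eq_zero (by norm_num)
  have hUrg : U 3 (oddPsiNeg * theta₄) = U 3 (r * g) - V 3 oddPsiNeg * V 3 theta₄ := by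
    have h : oddPsiNeg * theta₄ = r * g + V 3 (V 3 theta₄) * r - V 3 (V 3 oddPsiNeg) * g -
        V 3 (V 3 oddPsiNeg * V 3 theta₄) := by
      rw [map_mul]
      linear_combination theta₄ * hψ + (r - V 3 (V 3 oddPsiNeg)) * hθ
    rw [h, map_sub, map_sub, map_add, U_V_mul, U_V_mul, U_V, hUr, hUg]
    ring
  have h : oddPsiNeg * theta₄ ^ 2 = V 3 (V 3 theta₄ ^ 2) * r + 2 * (V 3 (V 3 theta₄) * (r * g)) +
      r * (g * g) - V 3 (V 3 oddPsiNeg) * theta₄ ^ 2 := by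
    rw [map_pow]
    linear_combination theta₄ ^ 2 * hψ + r * (theta₄ + V 3 (V 3 theta₄) + g) * hθ
  rw [h, map_sub, map_add, map_add, U_V_mul, U_ofNat_mul, U_V_mul, U_V_mul, U_theta₄_sq, hUr,
    hUrgg]
  linear_combination 2 * V 3 theta₄ * (U_oddPsiNeg_mul_theta₄ - hUrg)

lemma U_three_red_regSeries : U 3 (red 3 regSeries) = red 3 theta₄ * V 3 (red 3 oddPsiNeg) := by
  have hU := congrArg (red 3) U_oddPsiNeg_mul_theta₄_sq
  have hlevel := congrArg (red 3) four_mul_regSeries_pow_three_mul_theta₄_sq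
  have hψ := congrArg (red 3) regSeries_mul_theta₄
  have hVψ := congrArg (V 3) hψ
  simp only [red_U, red_V, map_mul, map_pow, map_sub, map_add, map_ofNat] at hU hlevel hψ hVψ
  have hthree : (3 : (ZMod 3)⟦X⟧) = 0 := natCast_self_eq_zero
  have hcube : red 3 oddPsiNeg * red 3 theta₄ ^ 2 = V 3 (red 3 theta₄) * red 3 regSeries := by
    rw [← pow_prime_eq_V 3, ← hψ]
    ring
  rw [hcube, U_V_mul] at hU
  refine mul_left_cancel₀ (red_theta₄_ne_zero (p := 3)) ?_
  linear_combination hU - 2 * V 3 (red 3 theta₄) * hlevel + red 3 theta₄ ^ 2 * hVψ +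
    (V 3 (red 3 oddPsiNeg) * V 3 (red 3 theta₄) ^ 2 -
      2 * V 3 (red 3 regSeries) * V 3 (red 3 theta₄) ^ 3 -
      red 3 theta₄ ^ 2 * V 3 (red 3 regSeries) * V 3 (red 3 theta₄)) * hthree

lemma iterate_U_red_regSeries (j : ℕ) : (U 3)^[2 * j + 1] (red 3 regSeries) =
    (-1 : ZMod 3) ^ j • (red 3 theta₄ * V 3 (red 3 oddPsiNeg)) := by
  have hθ : U 3 (red 3 theta₄) = V 3 (red 3 theta₄) := by rw [← red_U, U_theta₄, red_V]
  have hψ : U 3 (red 3 oddPsiNeg) = -V 3 (red 3 oddPsiNeg) := by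
    rw [← red_U, U_oddPsiNeg, map_neg, red_V]
  induction j with
  | zero => simp [U_three_red_regSeries]
  | succ j ih =>
    rw [show 2 * (j + 1) + 1 = 2 * j + 1 + 1 + 1 by ring, Function.iterate_succ_apply',
      Function.iterate_succ_apply', ih, map_smul, map_smul, U_mul_V, hθ, U_V_mul, hψ, mul_neg,
      pow_succ, mul_neg_one, smul_neg, neg_smul]

lemma coeff_red_theta₄_mul_V {p m : ℕ} [Fact p.Prime] (hm : m % 3 = 1) (f : (ZMod p)⟦X⟧) :
    coeff m (red p theta₄ * V 3 f) = 0 := by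
  have hsplit : red p theta₄ * V 3 f = V 3 (V 3 (red p theta₄) * f) +
      red p (theta₄ - C 1 * V 3 (V 3 theta₄)) * V 3 f := by
    simp only [map_sub, map_one, one_mul, red_V, map_mul]
    ring
  have h₀ : ¬ m ≡ 0 [MOD 3] := by simp [Nat.ModEq, hm]
  have h₂ : ¬ m ≡ 2 + 0 [MOD 3] := by simp [Nat.ModEq, hm]
  rw [hsplit, map_add, not_not.1 (mt (isSupportedMod_V 3 _ m) h₀), zero_add]
  exact not_not.1 (mt (((isSupportedMod_theta₄_sub.map _).mul (isSupportedMod_V 3 f)) m) h₂)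

theorem three_dvd_bReg_four {N m n : ℕ} (hN : Odd N) (hm : m % 3 = 1)
    (hn : 8 * n + 1 = 3 ^ N * m) : 3 ∣ bReg 4 n := by
  obtain ⟨j, rfl⟩ := hN
  have hcoeff := coeff_iterate_U 3 (2 * j + 1) m (red 3 regSeries)
  rw [← hn, coeff_map, coeff_regSeries, iterate_U_red_regSeries, map_smul,
    coeff_red_theta₄_mul_V hm, smul_zero] at hcoeff
  rw [← ZMod.natCast_eq_zero_iff]
  simpa using hcoeff.symm

lemma red_two_theta₄ : red 2 theta₄ = 1 := by
  have htwo : (2 : ZMod 2) = 0 := rfl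
  ext n
  rw [coeff_map, coeff_one, theta₄]
  by_cases h : ∃ k, 8 * k ^ 2 = n
  · obtain ⟨k, rfl⟩ := h
    rw [coeff_sparseSeries strictMono_eight_mul_sq]
    by_cases hk : k = 0 <;> simp [phiNegCoeff, hk, htwo]
  · rw [coeff_sparseSeries_eq_zero (not_exists.1 h), map_zero, if_neg]
    rintro rfl
    exact h ⟨0, rfl⟩

lemma sq_ne_prime_pow_mul {ℓ N m : ℕ} [Fact ℓ.Prime] (hN : Odd N) (hm : ¬ ℓ ∣ m) (a : ℕ) :
    a ^ 2 ≠ ℓ ^ N * m := by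
  intro h
  have hm₀ : m ≠ 0 := by rintro rfl; exact hm (dvd_zero ℓ)
  have hval := congrArg (padicValNat ℓ) h
  rw [padicValNat.pow, padicValNat.mul (pow_ne_zero _ (NeZero.ne ℓ)) hm₀, padicValNat.prime_pow,
    padicValNat.eq_zero_of_not_dvd hm, add_zero] at hval
  exact Nat.not_even_iff_odd.2 hN (hval ▸ even_two_mul _)

theorem two_dvd_bReg_four {N m n : ℕ} (hN : Odd N) (hm : ¬ 3 ∣ m)
    (hn : 8 * n + 1 = 3 ^ N * m) : 2 ∣ bReg 4 n := by
  have h := congrArg (red 2) regSeries_mul_theta₄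
  rw [map_mul, red_two_theta₄, mul_one] at h
  have hcoeff := congrArg (coeff (8 * n + 1)) h
  rw [coeff_map, coeff_map, coeff_regSeries, oddPsiNeg, coeff_sparseSeries_eq_zero fun k hk =>
    sq_ne_prime_pow_mul hN hm (2 * k + 1) (hk.trans hn), map_zero] at hcoeff
  rw [← ZMod.natCast_eq_zero_iff]
  simpa using hcoeff

/-! ### Arithmetic progressions -/

lemma exists_period_dvd_bReg_four {p : ℕ} (hp : p.Prime) : ∃ π, 0 < π ∧ ∀ N, Odd N → π ∣ N + 1 →
    ∀ m n, m % 3 = 1 → p ∣ 6 * m → 8 * n + 1 = 3 ^ N * m → p ∣ bReg 4 n := by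
  have : Fact p.Prime := ⟨hp⟩
  obtain rfl | hp2 := eq_or_ne p 2
  · exact ⟨1, one_pos, fun N hN _ m n hm _ => two_dvd_bReg_four hN (by lia)⟩
  obtain rfl | hp3 := eq_or_ne p 3
  · exact ⟨1, one_pos, fun N hN _ m n hm _ => three_dvd_bReg_four hN hm⟩
  obtain ⟨π, hπ, hper⟩ := exists_period_of_prime_ne hp2 hp3
  refine ⟨π, hπ, fun N _ hN m n hm hpm hn => ?_⟩
  have hp6 : p.Coprime 6 := .mul_right ((Nat.coprime_primes hp Nat.prime_two).2 hp2)
    ((Nat.coprime_primes hp Nat.prime_three).2 hp3)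
  obtain ⟨m', rfl⟩ := hp6.dvd_of_dvd_mul_left hpm
  refine hper N hN m' (fun h => ?_) n (by rw [hn]; ring)
  have := h.mul_left p
  lia

lemma exists_exponent_dvd_bReg_four {M : ℕ} (hM : Squarefree M) : ∃ N, Odd N ∧
    ∀ m n, m % 3 = 1 → M ∣ 6 * m → 8 * n + 1 = 3 ^ N * m → M ∣ bReg 4 n := by
  choose! π hπ hper using fun (p : ℕ) (hp : p.Prime) => exists_period_dvd_bReg_four hp
  have hprime (p : ℕ) (hp : p ∈ M.primeFactors) : p.Prime := Nat.prime_of_mem_primeFactors hp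
  have hpos : 0 < ∏ p ∈ M.primeFactors, π p := prod_pos fun p hp => hπ p (hprime p hp)
  obtain ⟨N, hN⟩ : ∃ N, N + 1 = 2 * ∏ p ∈ M.primeFactors, π p := ⟨_, Nat.sub_add_cancel (by lia)⟩
  have hodd : Odd N := Nat.odd_iff.2 (by lia)
  refine ⟨N, hodd, fun m n hm hMm hn => ?_⟩
  rw [← Nat.prod_primeFactors_of_squarefree hM]
  refine prod_primes_dvd _ (fun p hp => (hprime p hp).prime) fun p hp => ?_
  exact hper p (hprime p hp) N hodd (hN ▸ (dvd_prod_of_mem π hp).mul_left 2) m n hm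
    ((Nat.dvd_of_mem_primeFactors hp).trans hMm) hn

lemma exists_coprime_dvd_mul {M : ℕ} (hM : Squarefree M) (k : ℕ) :
    ∃ D : ℕ, D.Coprime k ∧ M ∣ k * D := by
  obtain ⟨D, hD⟩ := Nat.gcd_dvd_left M k
  have hcop : (M.gcd k).Coprime D := Nat.coprime_of_squarefree_mul (hD ▸ hM)
  refine ⟨D, Nat.eq_one_of_dvd_coprimes hcop ?_ (Nat.gcd_dvd_left D k), ?_⟩
  · exact Nat.gcd_dvd_gcd_of_dvd_left k (hD ▸ dvd_mul_left ..)
  · nth_rewrite 1 [hD]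
    exact mul_dvd_mul_right (Nat.gcd_dvd_right M k) D

lemma three_pow_mod_eight {N : ℕ} (hN : Odd N) : 3 ^ N % 8 = 3 := by
  obtain ⟨j, rfl⟩ := hN
  simp [pow_succ, pow_mul, Nat.mul_mod, Nat.pow_mod]

lemma exists_progression {N D : ℕ} (hN : Odd N) (hD : D.Coprime 6) : ∃ A B, 0 < B ∧ B < A ∧
    ∀ n, ∃ m, m % 3 = 1 ∧ D ∣ m ∧ 8 * (A * n + B) + 1 = 3 ^ N * m := by
  have hD24 : D.Coprime 24 := (hD.pow_right 3).coprime_dvd_right (by norm_num)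
  obtain ⟨y, -, hy⟩ := Nat.exists_mul_mod_eq_one_of_coprime hD24 (by norm_num)
  obtain ⟨x, hx, hDx⟩ : ∃ x < 24, D * x % 24 = 19 := by
    refine ⟨19 * y % 24, Nat.mod_lt _ (by norm_num), ?_⟩
    rw [Nat.mul_mod_mod, mul_left_comm, Nat.mul_mod, hy]
  have hmod : 3 ^ N * (D * x) % 8 = 1 := by
    rw [Nat.mul_mod, three_pow_mod_eight hN]
    lia
  obtain ⟨B, hB⟩ : ∃ B, 8 * B + 1 = 3 ^ N * (D * x) := ⟨3 ^ N * (D * x) / 8, by lia⟩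
  refine ⟨3 ^ (N + 1) * D, B, ?_, ?_, fun n => ⟨D * (x + 24 * n), ?_, dvd_mul_right .., ?_⟩⟩
  · have hdvd : 3 ∣ 8 * B + 1 := hB ▸ (dvd_pow_self 3 hN.pos.ne').mul_right _
    lia
  · have hle : 3 ^ N * (D * x) ≤ 3 ^ N * (D * 24) := by gcongr
    rw [pow_succ]
    lia
  · rw [mul_add, mul_left_comm]
    lia
  · rw [mul_add D, mul_add (3 ^ N), ← hB]
    ring

end FourRegular

/-- For every squarefree positive integer `M`, there is a Ramanujan-type congruence
`b_4(An + B) ≡ 0 (mod M)`. -/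
theorem b4_ramanujan_type_squarefree (M : ℕ) (hM : Squarefree M) :
    ∃ A B : ℕ, 0 < B ∧ B < A ∧ ∀ n : ℕ, bReg 4 (A * n + B) % M = 0 := by
  obtain ⟨N, hN, hdvd⟩ := FourRegular.exists_exponent_dvd_bReg_four hM
  obtain ⟨D, hD, hMD⟩ := FourRegular.exists_coprime_dvd_mul hM 6
  obtain ⟨A, B, hB, hBA, hprog⟩ := FourRegular.exists_progression hN hD
  refine ⟨A, B, hB, hBA, fun n => Nat.mod_eq_zero_of_dvd ?_⟩
  obtain ⟨m, hm, hDm, hn⟩ := hprog n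
  exact hdvd m _ hm (hMD.trans (mul_dvd_mul_left 6 hDm)) hn
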